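/- arXiv:2405.04501 — 3 statements merged into one kernel-verified Lean document; each statement's English description precedes it below -/
import Mathlib

section
/- Let d = 3. There exist constants c, C > 0 and n_0 ∈ ℕ such that for all n ≥ n_0, −C/n ≤ G_n^0(0,0) − G_{ℤ³}(0,0) ≤ −c/n, where G_n^0(0,0) = n^{−3} Σ_{w ∈ {0,…,n−1}³, w ≠ 0} 1/η_w; in particular G_n^0(x,x) − G_{ℤ³}(0,0) is negative and of order Θ(n^{−1}) uniformly for large n (note G_n^0(x,x) = G_n^0(0,0) for every x ∈ T_n³). -/
/-!
Write `E` for the symbol `2 ∑ᵢ (1 - cos 2πtᵢ)`, so that `G_{ℤ^d}(0,0)` is the integral of `1 / E`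
over the unit torus and `G_n^0(0,0)` is its Riemann sum over the nonzero points of the grid
`n⁻¹ℤ^d`. Cut the torus into cubes of side `1 / n` centred at the grid points.

On the cell of a nonzero grid point `p`, the average of `E` differs from `E p` by `O(n⁻²)`, because
the second differences of `E` are bounded. By convexity of `x ↦ 1 / x`, the average of `1 / E` is
therefore at least `1 / E p - O(n⁻²) / (E p)²`, and a matching upper bound comes from `|∇E|² ≲ E`.
As `E p` is comparable to `|k|² / n²` when `p = k / n`, these errors add up to a multiple of
`n⁻¹ ∑ |k|⁻⁴`, which converges for `d = 3`.

The Riemann sum omits the cell at the origin, over which the integral of `1 / E` in dimension three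
is at least `1 / (2πn)`. The gap has a sign because this beats the total error, which comes down to
the numerical inequality `∑ |k|⁻⁴ < 8π` for the sum over `ℤ³ ∖ {0}`.
-/

open MeasureTheory ProbabilityTheory Filter Topology Matrix
open scoped Classical ENNReal

noncomputable section

/-- The massive lattice Green's function `G_{ℤ^d, m²}(x, y)`. -/
def massGreenZ (d : ℕ) (m2 : ℝ) (x y : Fin d → ℤ) : ℝ :=
  ∫ t in Set.Icc (0 : Fin d → ℝ) 1,
    Real.cos (2 * Real.pi * ∑ i, ((x i : ℝ) - (y i : ℝ)) * t i) /
      (m2 + 2 * ∑ i, (1 - Real.cos (2 * Real.pi * t i)))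

/-- The lattice Green's function `G_{ℤ^d}(x, y)` (for `d ≥ 3`). -/
def greenZ (d : ℕ) (x y : Fin d → ℤ) : ℝ := massGreenZ d 0 x y

/-- The critical inverse temperature `β_c = G_{ℤ^d}(0, 0)`. -/
def betaC (d : ℕ) : ℝ := greenZ d 0 0

/-- The eigenvalues `η_w = 2 ∑_i (1 − cos(2π w_i / n))` of the discrete Laplacian on the
torus `T_n^d`. -/
def eta (d n : ℕ) (w : Fin d → Fin n) : ℝ :=
  2 * ∑ i, (1 - Real.cos (2 * Real.pi * ((w i : ℕ) : ℝ) / n))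

/-- The massive Green's function `G_{n,m²}(x,y)` on the torus `T_n^d`. -/
def torusGreen (d n : ℕ) (m2 : ℝ) (x y : Fin d → ZMod n) : ℝ :=
  (1 / (n : ℝ) ^ d) * ∑ w : Fin d → Fin n,
    Real.cos (2 * Real.pi * (∑ i, ((w i : ℕ) : ℝ) * ((x i - y i).val : ℝ)) / n) /
      (m2 + eta d n w)

/-- The zero-average Green's function `G_n^0(x,y)` on the torus `T_n^d` (`d ≥ 3`). -/
def torusGreen0 (d n : ℕ) (x y : Fin d → ZMod n) : ℝ :=
  (1 / (n : ℝ) ^ d) *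
    ∑ w ∈ Finset.univ.filter (fun w : Fin d → Fin n => ∃ i, (w i : ℕ) ≠ 0),
      Real.cos (2 * Real.pi * (∑ i, ((w i : ℕ) : ℝ) * ((x i - y i).val : ℝ)) / n) / eta d n w

section LatticeSymbol

open scoped Real

variable {ι : Type*} [Fintype ι]

/-- The Fourier symbol of the (positive) lattice Laplacian on `ℤ^ι`, in the frequency variable
normalised so that it is `1`-periodic in each coordinate: `η_w` is its value at `w / n`. -/
def latticeSymbol (t : ι → ℝ) : ℝ :=
  2 * ∑ i, (1 - Real.cos (2 * π * t i))

/-- The squared Euclidean distance from `t` to `ℤ^ι`. Each coordinate contributes its distance to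
`ℤ`, which Mathlib provides as the norm on `ℝ ⧸ ℤ`. -/
def distLatticeSq (t : ι → ℝ) : ℝ :=
  ∑ i, ‖(t i : UnitAddCircle)‖ ^ 2

lemma latticeSymbol_eq_sum_sin_sq (t : ι → ℝ) :
    latticeSymbol t = ∑ i, (2 * Real.sin (π * t i)) ^ 2 := by
  rw [latticeSymbol, Finset.mul_sum]
  refine Finset.sum_congr rfl fun i _ => ?_
  rw [mul_assoc, Real.cos_two_mul, Real.cos_sq']
  ring

lemma latticeSymbol_nonneg (t : ι → ℝ) : 0 ≤ latticeSymbol t := by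
  rw [latticeSymbol_eq_sum_sin_sq]
  positivity

@[fun_prop]
lemma continuous_latticeSymbol : Continuous (latticeSymbol : (ι → ℝ) → ℝ) := by
  unfold latticeSymbol
  fun_prop

lemma latticeSymbol_intCast_add (z : ι → ℤ) (t : ι → ℝ) :
    latticeSymbol ((fun i => (z i : ℝ)) + t) = latticeSymbol t := by
  have hshift (i : ι) : 2 * π * ((z i : ℝ) + t i) = 2 * π * t i + z i * (2 * π) := by ring
  simp only [latticeSymbol, Pi.add_apply, hshift, Real.cos_add_int_mul_two_pi]

lemma latticeSymbol_le_four_mul_card (t : ι → ℝ) : latticeSymbol t ≤ 4 * Fintype.card ι := by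
  have hcos : ∑ i, (1 - Real.cos (2 * π * t i)) ≤ ∑ _i : ι, (2 : ℝ) :=
    Finset.sum_le_sum fun i _ => by linarith [Real.neg_one_le_cos (2 * π * t i)]
  simp only [Finset.sum_const, Finset.card_univ, nsmul_eq_mul] at hcos
  rw [latticeSymbol]
  linarith

lemma abs_latticeSymbol_second_difference_le (x s : ι → ℝ) :
    |(latticeSymbol (x + s) - latticeSymbol x) + (latticeSymbol (x + -s) - latticeSymbol x)|
      ≤ 8 * π ^ 2 * ∑ i, s i ^ 2 := by
  have hdifference :
      (latticeSymbol (x + s) - latticeSymbol x) + (latticeSymbol (x + -s) - latticeSymbol x)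
        = ∑ i, 4 * Real.cos (2 * π * x i) * (1 - Real.cos (2 * π * s i)) := by
    simp only [latticeSymbol, ← mul_sub, ← mul_add, ← Finset.sum_sub_distrib,
      ← Finset.sum_add_distrib, Finset.mul_sum, Pi.add_apply, Pi.neg_apply]
    refine Finset.sum_congr rfl fun i _ => ?_
    rw [← sub_eq_add_neg, mul_add (2 * π), mul_sub (2 * π), Real.cos_add, Real.cos_sub]
    ring
  rw [hdifference, Finset.mul_sum]
  refine (Finset.abs_sum_le_sum_abs _ _).trans (Finset.sum_le_sum fun i _ => ?_)
  have hcos : |Real.cos (2 * π * x i)| ≤ 1 := Real.abs_cos_le_one _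
  have hnonneg : 0 ≤ 1 - Real.cos (2 * π * s i) := by linarith [Real.cos_le_one (2 * π * s i)]
  have hquad := Real.one_sub_sq_div_two_le_cos (x := 2 * π * s i)
  calc |4 * Real.cos (2 * π * x i) * (1 - Real.cos (2 * π * s i))|
      = 4 * |Real.cos (2 * π * x i)| * (1 - Real.cos (2 * π * s i)) := by
        rw [abs_mul, abs_mul, abs_of_nonneg hnonneg, abs_of_pos (four_pos (α := ℝ))]
    _ ≤ 4 * 1 * ((2 * π * s i) ^ 2 / 2) := by
        gcongr
        linarith
    _ = 8 * π ^ 2 * s i ^ 2 := by ring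

/-
Cauchy–Schwarz for `∑ i, (v i ^ 2 - u i ^ 2) = ∑ i, (v i - u i) * (v i + u i)`,
where `u i = 2 sin (π x i)`.
-/
lemma sq_latticeSymbol_add_sub_le (x s : ι → ℝ) :
    (latticeSymbol (x + s) - latticeSymbol x) ^ 2
      ≤ 8 * π ^ 2 * (∑ i, s i ^ 2) * (latticeSymbol (x + s) + latticeSymbol x) := by
  simp only [latticeSymbol_eq_sum_sin_sq]
  set u : ι → ℝ := fun i => 2 * Real.sin (π * x i) with hu
  set v : ι → ℝ := fun i => 2 * Real.sin (π * (x + s) i) with hv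
  have hdiff : ∑ i, (v i - u i) ^ 2 ≤ 4 * π ^ 2 * ∑ i, s i ^ 2 := by
    rw [Finset.mul_sum]
    refine Finset.sum_le_sum fun i _ => ?_
    have hlip := Real.abs_sin_sub_sin_le (π * (x + s) i) (π * x i)
    rw [← mul_sub, Pi.add_apply, add_sub_cancel_left] at hlip
    calc (v i - u i) ^ 2 = 4 * (Real.sin (π * (x i + s i)) - Real.sin (π * x i)) ^ 2 := by
          simp only [hu, hv, Pi.add_apply]
          ring
      _ ≤ 4 * (π * s i) ^ 2 := by
          gcongr 4 * ?_
          exact sq_le_sq.mpr hlip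
      _ = 4 * π ^ 2 * s i ^ 2 := by ring
  have hsum : ∑ i, (v i + u i) ^ 2 ≤ 2 * (∑ i, v i ^ 2 + ∑ i, u i ^ 2) := by
    rw [← Finset.sum_add_distrib, Finset.mul_sum]
    exact Finset.sum_le_sum fun i _ => add_sq_le
  calc (∑ i, v i ^ 2 - ∑ i, u i ^ 2) ^ 2
      = (∑ i, (v i - u i) * (v i + u i)) ^ 2 := by
        rw [← Finset.sum_sub_distrib]
        congr 1
        exact Finset.sum_congr rfl fun i _ => by ring
    _ ≤ (∑ i, (v i - u i) ^ 2) * ∑ i, (v i + u i) ^ 2 := Finset.sum_mul_sq_le_sq_mul_sq _ _ _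
    _ ≤ (4 * π ^ 2 * ∑ i, s i ^ 2) * (2 * (∑ i, v i ^ 2 + ∑ i, u i ^ 2)) := by gcongr
    _ = _ := by ring

lemma sq_le_sin_sq_mul_one_add_sq {y : ℝ} (hy : |y| ≤ π / 2) :
    y ^ 2 ≤ Real.sin y ^ 2 * (1 + y ^ 2) := by
  wlog h0 : 0 ≤ y generalizing y
  · simpa using this (y := -y) (by rwa [abs_neg]) (by linarith)
  rw [abs_of_nonneg h0] at hy
  have hcos : 0 ≤ Real.cos y := Real.cos_nonneg_of_mem_Icc ⟨by linarith, hy⟩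
  have htan : y * Real.cos y ≤ Real.sin y := by
    rcases hy.lt_or_eq with hlt | rfl
    · have hpos : 0 < Real.cos y := Real.cos_pos_of_mem_Ioo ⟨by linarith, hlt⟩
      rw [← le_div_iff₀ hpos, ← Real.tan_eq_sin_div_cos]
      exact Real.le_tan h0 hlt
    · simp
  calc y ^ 2 = (y * Real.cos y) ^ 2 + y ^ 2 * Real.sin y ^ 2 := by
        rw [mul_pow, ← mul_add, Real.cos_sq_add_sin_sq, mul_one]
    _ ≤ Real.sin y ^ 2 + y ^ 2 * Real.sin y ^ 2 := by gcongr
    _ = Real.sin y ^ 2 * (1 + y ^ 2) := by ring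

lemma unitAddCircle_norm_le_half (t : UnitAddCircle) : ‖t‖ ≤ 1 / 2 := by
  simpa using AddCircle.norm_le_half_period (x := t) 1 one_ne_zero

lemma sin_sq_pi_mul_unitAddCircle_norm (t : ℝ) :
    Real.sin (π * ‖(t : UnitAddCircle)‖) ^ 2 = Real.sin (π * t) ^ 2 := by
  have hround : 2 * (π * (t - round t)) = 2 * (π * t) - round t * (2 * π) := by ring
  have habs : Real.sin (π * |t - round t|) ^ 2 = Real.sin (π * (t - round t)) ^ 2 := by
    rcases abs_choice (t - round t) with h | h <;> rw [h]
    rw [mul_neg, Real.sin_neg, neg_sq]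
  rw [UnitAddCircle.norm_eq, habs, Real.sin_sq_eq_half_sub, hround, Real.cos_sub_int_mul_two_pi,
    ← Real.sin_sq_eq_half_sub]

lemma latticeSymbol_le_distLatticeSq (t : ι → ℝ) :
    latticeSymbol t ≤ 4 * π ^ 2 * distLatticeSq t := by
  rw [latticeSymbol_eq_sum_sin_sq, distLatticeSq, Finset.mul_sum]
  refine Finset.sum_le_sum fun i _ => ?_
  rw [mul_pow, ← sin_sq_pi_mul_unitAddCircle_norm]
  linarith [Real.sin_sq_le_sq (x := π * ‖(t i : UnitAddCircle)‖)]

lemma distLatticeSq_nonneg (t : ι → ℝ) : 0 ≤ distLatticeSq t :=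
  Finset.sum_nonneg fun _ _ => sq_nonneg _

lemma distLatticeSq_le_latticeSymbol_mul (t : ι → ℝ) :
    4 * π ^ 2 * distLatticeSq t ≤ latticeSymbol t * (1 + π ^ 2 * distLatticeSq t) := by
  conv_lhs => rw [distLatticeSq, Finset.mul_sum]
  rw [latticeSymbol_eq_sum_sin_sq, Finset.sum_mul]
  refine Finset.sum_le_sum fun i hi => ?_
  set r := ‖(t i : UnitAddCircle)‖
  have hr_le : r ^ 2 ≤ distLatticeSq t :=
    Finset.single_le_sum (f := fun i => ‖(t i : UnitAddCircle)‖ ^ 2) (fun _ _ => sq_nonneg _) hi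
  have habs : |π * r| ≤ π / 2 := by
    rw [abs_of_nonneg (by positivity)]
    nlinarith [unitAddCircle_norm_le_half (t i), Real.pi_pos]
  calc 4 * π ^ 2 * r ^ 2 = 4 * (π * r) ^ 2 := by ring
    _ ≤ 4 * (Real.sin (π * r) ^ 2 * (1 + (π * r) ^ 2)) := by
        gcongr
        exact sq_le_sin_sq_mul_one_add_sq habs
    _ = (2 * Real.sin (π * t i)) ^ 2 * (1 + π ^ 2 * r ^ 2) := by
        rw [sin_sq_pi_mul_unitAddCircle_norm]
        ring
    _ ≤ (2 * Real.sin (π * t i)) ^ 2 * (1 + π ^ 2 * distLatticeSq t) := by gcongr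

lemma latticeSymbol_pos {t : ι → ℝ} (ht : 0 < distLatticeSq t) : 0 < latticeSymbol t := by
  have hfactor : 0 < 1 + π ^ 2 * distLatticeSq t := by positivity
  have hprod : 0 < latticeSymbol t * (1 + π ^ 2 * distLatticeSq t) :=
    lt_of_lt_of_le (by positivity) (distLatticeSq_le_latticeSymbol_mul t)
  exact pos_of_mul_pos_left hprod hfactor.le

lemma one_div_distLatticeSq_le (t : ι → ℝ) :
    1 / (4 * π ^ 2 * distLatticeSq t) ≤ 1 / latticeSymbol t := by
  rcases (distLatticeSq_nonneg t).eq_or_lt with h0 | hpos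
  · simpa [← h0] using latticeSymbol_nonneg t
  · exact one_div_le_one_div_of_le (latticeSymbol_pos hpos) (latticeSymbol_le_distLatticeSq t)

lemma one_div_latticeSymbol_le (t : ι → ℝ) :
    1 / latticeSymbol t ≤ 1 / (4 * π ^ 2 * distLatticeSq t) + 1 / 4 := by
  rcases (distLatticeSq_nonneg t).eq_or_lt with h0 | hpos
  · have hsymbol : latticeSymbol t = 0 :=
      le_antisymm (by simpa [← h0] using latticeSymbol_le_distLatticeSq t) (latticeSymbol_nonneg t)
    simp [hsymbol, ← h0]
  · have hE := latticeSymbol_pos hpos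
    rw [div_add_div _ _ (by positivity) four_ne_zero, div_le_div_iff₀ hE (by positivity)]
    linarith [distLatticeSq_le_latticeSymbol_mul t]

end LatticeSymbol

section Grid

open scoped Real

variable {ι : Type*} {n : ℕ}

/-- The grid point `w / n` of `(n⁻¹ ℤ)^ι ∩ [0, 1)^ι`. -/
def gridPoint (w : ι → Fin n) : ι → ℝ :=
  fun i => ((w i : ℕ) : ℝ) / n

lemma unitAddCircle_norm_intCast_div_natCast (hn : 0 < n) (k : ℤ) :
    ‖((k / n : ℝ) : UnitAddCircle)‖ = |(k.bmod n : ℝ)| / n := by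
  have hn' : (0 : ℝ) < n := by exact_mod_cast hn
  have hdiv : (k / n : ℝ) = (k.bmod n / n : ℝ) + (k.bdiv n : ℤ) := by
    have hk : ((k.bmod n + n * k.bdiv n : ℤ) : ℝ) = k := by rw [Int.bmod_add_bdiv]
    push_cast at hk
    field_simp
    linarith
  have hhalf : |(k.bmod n / n : ℝ)| ≤ |1| / 2 := by
    have hbmod : |2 * k.bmod n| ≤ n := by
      have := Int.le_bmod (x := k) hn
      have := Int.bmod_le (x := k) hn
      rw [abs_le]
      omega
    have hbmod' : |2 * (k.bmod n : ℝ)| ≤ n := by exact_mod_cast hbmod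
    rw [abs_mul, abs_two] at hbmod'
    rw [abs_div, Nat.abs_cast, abs_one, div_le_iff₀ hn']
    linarith
  rw [hdiv, UnitAddCircle.norm_eq, round_add_intCast]
  push_cast
  rw [add_sub_add_right_eq_sub, ← UnitAddCircle.norm_eq,
    (AddCircle.norm_coe_eq_abs_iff 1 one_ne_zero).mpr hhalf, abs_div, Nat.abs_cast]

lemma unitAddCircle_norm_intCast_div_natCast_le_two_mul (hn : 0 < n) (k : ℤ) {s : ℝ}
    (hs : |s| ≤ 1 / (2 * n)) :
    ‖((k / n : ℝ) : UnitAddCircle)‖ ≤ 2 * ‖((k / n + s : ℝ) : UnitAddCircle)‖ := by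
  have : (0 : ℝ) < n := by exact_mod_cast hn
  rcases eq_or_ne (k.bmod n) 0 with h0 | hne
  · simp [unitAddCircle_norm_intCast_div_natCast hn, h0]
  have hgap : 1 / (n : ℝ) ≤ ‖((k / n : ℝ) : UnitAddCircle)‖ := by
    rw [unitAddCircle_norm_intCast_div_natCast hn]
    gcongr
    exact_mod_cast Int.one_le_abs hne
  have hnorm_s : ‖(s : UnitAddCircle)‖ ≤ |s| := by
    simpa [UnitAddCircle.norm_eq] using round_le s 0
  have htriangle : ‖((k / n : ℝ) : UnitAddCircle)‖
      ≤ ‖((k / n + s : ℝ) : UnitAddCircle)‖ + ‖(s : UnitAddCircle)‖ := by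
    rw [AddCircle.coe_add]
    exact norm_le_add_norm_add _ _
  have hhalf : 1 / (2 * (n : ℝ)) = 1 / n / 2 := by field_simp
  linarith

lemma injective_bmod_coe_fin : Function.Injective fun k : Fin n => ((k : ℕ) : ℤ).bmod n := by
  intro a b hab
  have hmod := congrArg (· % (n : ℤ)) hab
  simp only [Int.bmod_emod] at hmod
  rw [Int.emod_eq_of_lt (by positivity) (by exact_mod_cast a.isLt),
    Int.emod_eq_of_lt (by positivity) (by exact_mod_cast b.isLt)] at hmod
  exact Fin.ext (by exact_mod_cast hmod)

variable [Fintype ι]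

lemma distLatticeSq_gridPoint (hn : 0 < n) (w : ι → Fin n) :
    distLatticeSq (gridPoint w) = (∑ i, (((w i : ℕ) : ℤ).bmod n : ℝ) ^ 2) / n ^ 2 := by
  rw [distLatticeSq, Finset.sum_div]
  refine Finset.sum_congr rfl fun i _ => ?_
  have := unitAddCircle_norm_intCast_div_natCast hn (w i : ℕ)
  rw [Int.cast_natCast] at this
  rw [gridPoint, this, div_pow, sq_abs]

lemma distLatticeSq_gridPoint_pos {w : ι → Fin n} (hw : ∃ i, (w i : ℕ) ≠ 0) :
    0 < distLatticeSq (gridPoint w) := by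
  obtain ⟨i, hi⟩ := hw
  have hn : 0 < n := (w i).pos
  have hne : ((w i : ℕ) : ℤ).bmod n ≠ 0 := by
    have hw0 : w i ≠ ⟨0, hn⟩ := fun h => hi (by rw [h])
    simpa using injective_bmod_coe_fin.ne hw0
  rw [distLatticeSq_gridPoint hn]
  have : 0 < ∑ i, (((w i : ℕ) : ℤ).bmod n : ℝ) ^ 2 :=
    Finset.sum_pos' (fun _ _ => sq_nonneg _) ⟨i, Finset.mem_univ i, by positivity⟩
  positivity

lemma distLatticeSq_gridPoint_le_four_mul {w : ι → Fin n} {s : ι → ℝ}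
    (hs : ‖s‖ ≤ 1 / (2 * n)) :
    distLatticeSq (gridPoint w) ≤ 4 * distLatticeSq (gridPoint w + s) := by
  rw [distLatticeSq, distLatticeSq, Finset.mul_sum]
  refine Finset.sum_le_sum fun i _ => ?_
  have hcoord := unitAddCircle_norm_intCast_div_natCast_le_two_mul (w i).pos (w i : ℕ)
    ((norm_le_pi_norm s i).trans hs)
  rw [Int.cast_natCast] at hcoord
  calc ‖(gridPoint w i : UnitAddCircle)‖ ^ 2
      ≤ (2 * ‖(((gridPoint w + s) i : ℝ) : UnitAddCircle)‖) ^ 2 := by gcongr; exact hcoord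
    _ = 4 * ‖(((gridPoint w + s) i : ℝ) : UnitAddCircle)‖ ^ 2 := by ring

lemma latticeSymbol_gridPoint_add_pos {w : ι → Fin n} (hw : ∃ i, (w i : ℕ) ≠ 0) {s : ι → ℝ}
    (hs : ‖s‖ ≤ 1 / (2 * n)) : 0 < latticeSymbol (gridPoint w + s) :=
  latticeSymbol_pos <| by
    linarith [distLatticeSq_gridPoint_pos hw, distLatticeSq_gridPoint_le_four_mul (w := w) hs]

lemma latticeSymbol_gridPoint_le_mul {w : ι → Fin n} (hw : ∃ i, (w i : ℕ) ≠ 0) {s : ι → ℝ}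
    (hs : ‖s‖ ≤ 1 / (2 * n)) :
    latticeSymbol (gridPoint w) ≤ (4 + Fintype.card ι) * latticeSymbol (gridPoint w + s) := by
  have hQ := distLatticeSq_gridPoint_pos hw
  have hE := latticeSymbol_pos hQ
  have hEs := latticeSymbol_gridPoint_add_pos hw hs
  have hQle := distLatticeSq_gridPoint_le_four_mul (w := w) hs
  have hQs : 0 < distLatticeSq (gridPoint w + s) := by linarith
  have hrec : 1 / latticeSymbol (gridPoint w + s)
      ≤ (4 + Fintype.card ι) / latticeSymbol (gridPoint w) :=
    calc 1 / latticeSymbol (gridPoint w + s)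
        ≤ 1 / (4 * π ^ 2 * distLatticeSq (gridPoint w + s)) + 1 / 4 := one_div_latticeSymbol_le _
      _ ≤ 4 / (4 * π ^ 2 * distLatticeSq (gridPoint w)) + 1 / 4 := by
          gcongr ?_ + _
          rw [div_le_div_iff₀ (by positivity) (by positivity)]
          linarith [mul_le_mul_of_nonneg_left hQle (by positivity : 0 ≤ 4 * π ^ 2)]
      _ ≤ 4 / latticeSymbol (gridPoint w) + Fintype.card ι / latticeSymbol (gridPoint w) := by
          refine add_le_add ?_ ?_
          · gcongr
            exact latticeSymbol_le_distLatticeSq _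
          · rw [div_le_div_iff₀ four_pos hE]
            linarith [latticeSymbol_le_four_mul_card (gridPoint w)]
      _ = (4 + Fintype.card ι) / latticeSymbol (gridPoint w) := by rw [add_div]
  rwa [div_le_div_iff₀ hEs hE, one_mul] at hrec

end Grid

section Reciprocal

lemma one_div_sub_tangent {a b : ℝ} (ha : a ≠ 0) (hb : b ≠ 0) :
    1 / b - (1 / a - (b - a) / a ^ 2) = (b - a) ^ 2 / (b * a ^ 2) := by
  field_simp
  ring

variable {α : Type*} [MeasurableSpace α] {μ : Measure α} [IsFiniteMeasure μ] {f : α → ℝ} {a : ℝ}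

lemma integral_tangent_one_div (hf : Integrable f μ) :
    ∫ x, (1 / a - (f x - a) / a ^ 2) ∂μ = μ.real Set.univ / a - (∫ x, (f x - a) ∂μ) / a ^ 2 := by
  rw [integral_sub (integrable_const _) (by fun_prop), integral_const, integral_div, smul_eq_mul,
    mul_one_div]

lemma le_integral_one_div (ha : 0 < a) (hpos : ∀ᵐ x ∂μ, 0 < f x) (hf : Integrable f μ)
    (hinv : Integrable (fun x => 1 / f x) μ) :
    μ.real Set.univ / a - (∫ x, (f x - a) ∂μ) / a ^ 2 ≤ ∫ x, 1 / f x ∂μ := by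
  rw [← integral_tangent_one_div hf]
  refine integral_mono_ae (by fun_prop) hinv ?_
  filter_upwards [hpos] with x hx
  rw [← sub_nonneg, one_div_sub_tangent ha.ne' hx.ne']
  positivity

lemma integral_one_div_le (ha : 0 < a) (hpos : ∀ᵐ x ∂μ, 0 < f x) (hf : Integrable f μ)
    (hinv : Integrable (fun x => 1 / f x) μ) {M : ℝ} (hM : ∀ᵐ x ∂μ, (f x - a) ^ 2 ≤ M * f x) :
    ∫ x, 1 / f x ∂μ
      ≤ μ.real Set.univ / a - (∫ x, (f x - a) ∂μ) / a ^ 2 + μ.real Set.univ * (M / a ^ 2) := by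
  rw [← integral_tangent_one_div hf, ← smul_eq_mul, ← integral_const, ← integral_add (by fun_prop)
    (by fun_prop)]
  refine integral_mono_ae hinv (by fun_prop) ?_
  filter_upwards [hpos, hM] with x hx hxM
  rw [← sub_le_iff_le_add', one_div_sub_tangent ha.ne' hx.ne', div_le_div_iff₀ (by positivity)
    (by positivity), ← mul_assoc]
  gcongr

end Reciprocal

section Cube

open scoped Real
open Metric

variable {ι : Type*} [Fintype ι] {h : ℝ}

lemma volume_real_pi_closedBall (hh : 0 ≤ h) :
    volume.real (closedBall (0 : ι → ℝ) h) = (2 * h) ^ Fintype.card ι := by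
  rw [Measure.real, Real.volume_pi_closedBall _ hh, ENNReal.toReal_ofReal (by positivity)]

lemma setIntegral_closedBall_sq_apply (hh : 0 ≤ h) (i : ι) :
    ∫ s in closedBall (0 : ι → ℝ) h, s i ^ 2 = (2 * h) ^ Fintype.card ι * (h ^ 2 / 3) := by
  have hinterval : ∫ y in closedBall (0 : ℝ) h, y ^ 2 = 2 * h * (h ^ 2 / 3) := by
    rw [Real.closedBall_eq_Icc, integral_Icc_eq_integral_Ioc,
      ← intervalIntegral.integral_of_le (by linarith), integral_pow]
    push_cast
    ring
  have hmap := integral_map (μ := Measure.pi fun _ : ι => volume.restrict (closedBall (0 : ℝ) h))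
    (f := fun y : ℝ => y ^ 2) (measurable_pi_apply i).aemeasurable (by fun_prop)
  rw [closedBall_pi _ hh, volume_pi, Measure.restrict_pi_pi]
  simp only [Pi.zero_apply] at hmap ⊢
  rw [← hmap, Measure.pi_map_eval, integral_smul_measure, hinterval]
  simp only [Measure.restrict_apply_univ, Real.volume_closedBall, Finset.prod_const,
    Finset.card_erase_of_mem (Finset.mem_univ i), Finset.card_univ, ENNReal.toReal_pow,
    ENNReal.toReal_ofReal (by positivity : 0 ≤ 2 * h), smul_eq_mul]
  rw [← mul_assoc, pow_sub_one_mul (Fintype.card_pos_iff.mpr ⟨i⟩).ne']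

lemma setIntegral_closedBall_sum_sq (hh : 0 ≤ h) :
    ∫ s in closedBall (0 : ι → ℝ) h, ∑ i, s i ^ 2
      = (2 * h) ^ Fintype.card ι * (Fintype.card ι * h ^ 2 / 3) := by
  have hint (i : ι) : IntegrableOn (fun s : ι → ℝ => s i ^ 2) (closedBall 0 h) :=
    ContinuousOn.integrableOn_compact (isCompact_closedBall 0 h) (by fun_prop)
  rw [integral_finsetSum _ fun i _ => hint i]
  simp only [setIntegral_closedBall_sq_apply hh, Finset.sum_const, Finset.card_univ, nsmul_eq_mul]
  ring

lemma setIntegral_closedBall_comp_neg {E : Type*} [NormedAddCommGroup E] [MeasurableSpace E]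
    [BorelSpace E] (μ : Measure E) [μ.IsNegInvariant] (F : E → ℝ) (h : ℝ) :
    ∫ s in closedBall 0 h, F (-s) ∂μ = ∫ s in closedBall 0 h, F s ∂μ := by
  have hpre : (fun s : E => -s) ⁻¹' closedBall 0 h = closedBall 0 h := by
    ext s
    simp
  simpa only [hpre] using (Measure.measurePreserving_neg μ).setIntegral_preimage_emb
    (Homeomorph.neg E).measurableEmbedding F (closedBall 0 h)

/- The first-order term of `latticeSymbol` at `x` is odd, so it does not contribute. -/
lemma abs_setIntegral_latticeSymbol_sub_le (hh : 0 ≤ h) (x : ι → ℝ) :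
    |∫ s in closedBall 0 h, (latticeSymbol (x + s) - latticeSymbol x)|
      ≤ (2 * h) ^ Fintype.card ι * (4 * π ^ 2 * Fintype.card ι * h ^ 2 / 3) := by
  have hcompact : IsCompact (closedBall (0 : ι → ℝ) h) := isCompact_closedBall 0 h
  set F : (ι → ℝ) → ℝ := fun s => latticeSymbol (x + s) - latticeSymbol x
  have hsymm : 2 * ∫ s in closedBall 0 h, F s = ∫ s in closedBall 0 h, (F s + F (-s)) := by
    rw [integral_add (ContinuousOn.integrableOn_compact hcompact (by fun_prop))
      (ContinuousOn.integrableOn_compact hcompact (by fun_prop)), setIntegral_closedBall_comp_neg,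
      two_mul]
  have hbound : |2 * ∫ s in closedBall 0 h, F s|
      ≤ ∫ s in closedBall (0 : ι → ℝ) h, 8 * π ^ 2 * ∑ i, s i ^ 2 := by
    rw [hsymm, ← Real.norm_eq_abs]
    exact norm_integral_le_of_norm_le (ContinuousOn.integrableOn_compact hcompact (by fun_prop))
      (.of_forall (abs_latticeSymbol_second_difference_le x))
  rw [integral_const_mul, setIntegral_closedBall_sum_sq hh, abs_mul, abs_two] at hbound
  linarith

end Cube

section CellEstimate

open scoped Real
open Metric

variable {ι : Type*} [Fintype ι] {n : ℕ} {w : ι → Fin n}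

lemma integrableOn_one_div_latticeSymbol_cell (hw : ∃ i, (w i : ℕ) ≠ 0) :
    IntegrableOn (fun s => 1 / latticeSymbol (gridPoint w + s)) (closedBall 0 (1 / (2 * n))) := by
  refine ContinuousOn.integrableOn_compact (isCompact_closedBall _ _) ?_
  refine continuousOn_const.div (by fun_prop) fun s hs => ?_
  exact (latticeSymbol_gridPoint_add_pos hw (mem_closedBall_zero_iff.mp hs)).ne'

lemma volume_real_cell :
    volume.real (closedBall (0 : ι → ℝ) (1 / (2 * n))) = (1 / n) ^ Fintype.card ι := by
  rw [volume_real_pi_closedBall (by positivity), show 2 * (1 / (2 * (n : ℝ))) = 1 / n by ring]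

lemma abs_setIntegral_latticeSymbol_cell_sub_le (w : ι → Fin n) :
    |∫ s in closedBall 0 (1 / (2 * n)),
        (latticeSymbol (gridPoint w + s) - latticeSymbol (gridPoint w))|
      ≤ (1 / n) ^ Fintype.card ι * (π ^ 2 * Fintype.card ι / (3 * n ^ 2)) := by
  refine (abs_setIntegral_latticeSymbol_sub_le (by positivity) _).trans_eq ?_
  rw [show 2 * (1 / (2 * (n : ℝ))) = 1 / n by ring]
  ring

lemma sq_latticeSymbol_cell_sub_le (hw : ∃ i, (w i : ℕ) ≠ 0) {s : ι → ℝ}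
    (hs : ‖s‖ ≤ 1 / (2 * n)) :
    (latticeSymbol (gridPoint w + s) - latticeSymbol (gridPoint w)) ^ 2
      ≤ 2 * π ^ 2 * Fintype.card ι * (5 + Fintype.card ι) / n ^ 2
        * latticeSymbol (gridPoint w + s) := by
  have hsum : ∑ i, s i ^ 2 ≤ Fintype.card ι * (1 / (2 * n)) ^ 2 := by
    rw [← nsmul_eq_mul, ← Finset.card_univ]
    refine Finset.sum_le_card_nsmul _ _ _ fun i _ => ?_
    exact sq_le_sq' (neg_le_of_abs_le ((norm_le_pi_norm s i).trans hs))
      (le_of_abs_le ((norm_le_pi_norm s i).trans hs))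
  calc _ ≤ 8 * π ^ 2 * (∑ i, s i ^ 2)
        * (latticeSymbol (gridPoint w + s) + latticeSymbol (gridPoint w)) :=
        sq_latticeSymbol_add_sub_le _ _
    _ ≤ 8 * π ^ 2 * (Fintype.card ι * (1 / (2 * n)) ^ 2)
        * ((5 + Fintype.card ι) * latticeSymbol (gridPoint w + s)) := by
        gcongr
        · exact add_nonneg (latticeSymbol_nonneg _) (latticeSymbol_nonneg _)
        · linarith [latticeSymbol_gridPoint_le_mul hw hs]
    _ = _ := by ring

lemma ae_restrict_latticeSymbol_cell_pos (hw : ∃ i, (w i : ℕ) ≠ 0) :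
    ∀ᵐ s ∂volume.restrict (closedBall 0 (1 / (2 * n))), 0 < latticeSymbol (gridPoint w + s) :=
  ae_restrict_of_forall_mem measurableSet_closedBall fun _ hs =>
    latticeSymbol_gridPoint_add_pos hw (mem_closedBall_zero_iff.mp hs)

lemma le_setIntegral_one_div_latticeSymbol_cell (hw : ∃ i, (w i : ℕ) ≠ 0) :
    (1 / n) ^ Fintype.card ι * (1 / latticeSymbol (gridPoint w)
        - π ^ 2 * Fintype.card ι / (3 * n ^ 2) * (1 / latticeSymbol (gridPoint w)) ^ 2)
      ≤ ∫ s in closedBall 0 (1 / (2 * n)), 1 / latticeSymbol (gridPoint w + s) := by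
  have hfin : IsFiniteMeasure (volume.restrict (closedBall (0 : ι → ℝ) (1 / (2 * n)))) :=
    isFiniteMeasure_restrict.2 measure_closedBall_lt_top.ne
  have hpos : 0 < latticeSymbol (gridPoint w) := latticeSymbol_pos (distLatticeSq_gridPoint_pos hw)
  have hconvex := le_integral_one_div hpos (ae_restrict_latticeSymbol_cell_pos hw)
    (ContinuousOn.integrableOn_compact (isCompact_closedBall 0 _) (by fun_prop))
    (integrableOn_one_div_latticeSymbol_cell hw)
  rw [measureReal_restrict_apply_univ, volume_real_cell] at hconvex
  refine le_trans ?_ hconvex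
  have hmean := div_le_div_of_nonneg_right
    (le_of_abs_le (abs_setIntegral_latticeSymbol_cell_sub_le w))
    (sq_nonneg (latticeSymbol (gridPoint w)))
  refine le_trans (le_of_eq ?_) (sub_le_sub_left hmean _)
  ring

lemma setIntegral_one_div_latticeSymbol_cell_le (hw : ∃ i, (w i : ℕ) ≠ 0) :
    ∫ s in closedBall 0 (1 / (2 * n)), 1 / latticeSymbol (gridPoint w + s)
      ≤ (1 / n) ^ Fintype.card ι * (1 / latticeSymbol (gridPoint w)
        + (π ^ 2 * Fintype.card ι / (3 * n ^ 2)
            + 2 * π ^ 2 * Fintype.card ι * (5 + Fintype.card ι) / n ^ 2)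
          * (1 / latticeSymbol (gridPoint w)) ^ 2) := by
  have hfin : IsFiniteMeasure (volume.restrict (closedBall (0 : ι → ℝ) (1 / (2 * n)))) :=
    isFiniteMeasure_restrict.2 measure_closedBall_lt_top.ne
  have hpos : 0 < latticeSymbol (gridPoint w) := latticeSymbol_pos (distLatticeSq_gridPoint_pos hw)
  have htangent := integral_one_div_le hpos (ae_restrict_latticeSymbol_cell_pos hw)
    (ContinuousOn.integrableOn_compact (isCompact_closedBall 0 _) (by fun_prop))
    (integrableOn_one_div_latticeSymbol_cell hw)
    (ae_restrict_of_forall_mem measurableSet_closedBall fun s hs =>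
      sq_latticeSymbol_cell_sub_le hw (mem_closedBall_zero_iff.mp hs))
  rw [measureReal_restrict_apply_univ, volume_real_cell] at htangent
  refine htangent.trans ?_
  have hmean := div_le_div_of_nonneg_right
    (neg_le_of_abs_le (abs_setIntegral_latticeSymbol_cell_sub_le w))
    (sq_nonneg (latticeSymbol (gridPoint w)))
  refine (add_le_add_left (sub_le_sub_left hmean _) _).trans_eq ?_
  ring

end CellEstimate

section GridDecomposition

open Metric
open scoped Pointwise

variable {ι : Type*} [Fintype ι] {E : Type*} [NormedAddCommGroup E] [NormedSpace ℝ E]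
  {F : (ι → ℝ) → E}

lemma fundamentalDomain_basisFun_ae_eq_Icc :
    ZSpan.fundamentalDomain (Pi.basisFun ℝ ι) =ᵐ[volume] Set.Icc (0 : ι → ℝ) 1 := by
  have hpi : ZSpan.fundamentalDomain (Pi.basisFun ℝ ι)
      = Set.univ.pi fun _ => Set.Ico (0 : ℝ) 1 := by
    ext t
    simp [ZSpan.mem_fundamentalDomain]
  rw [hpi, volume_pi]
  exact Measure.univ_pi_Ico_ae_eq_Icc (f := fun _ => (0 : ℝ)) (g := fun _ => (1 : ℝ))

lemma setIntegral_Icc_eq_vadd_fundamentalDomain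
    (hF : ∀ (z : ι → ℤ) t, F ((fun i => (z i : ℝ)) + t) = F t) (a : ι → ℝ) :
    ∫ t in Set.Icc 0 1, F t = ∫ t in a +ᵥ ZSpan.fundamentalDomain (Pi.basisFun ℝ ι), F t := by
  have hcountable : Countable (Submodule.span ℤ (Set.range (Pi.basisFun ℝ ι))).toAddSubgroup :=
    inferInstanceAs (Countable (Submodule.span ℤ (Set.range (Pi.basisFun ℝ ι))))
  have hdomain := ZSpan.isAddFundamentalDomain' (Pi.basisFun ℝ ι) volume
  rw [← hdomain.setIntegral_eq (hdomain.vadd_of_comm a),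
    setIntegral_congr_set fundamentalDomain_basisFun_ae_eq_Icc]
  rintro ⟨g, hg⟩ x
  rw [Submodule.mem_toAddSubgroup, Module.Basis.mem_span_iff_repr_mem] at hg
  choose z hz using hg
  have hgz : (fun i => (z i : ℝ)) = g := funext fun i => by simpa using hz i
  exact hgz ▸ hF z x

/-- The half-open cube of side `1 / n` centred at `w / n`, written as the set of points that
round to `w / n`. -/
def gridCell {ι : Type*} {n : ℕ} (w : ι → Fin n) : Set (ι → ℝ) :=
  {t | ∀ i, ⌊(n : ℝ) * t i + 1 / 2⌋ = ((w i : ℕ) : ℤ)}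

variable {n : ℕ}

lemma measurableSet_gridCell {ι : Type*} [Finite ι] (w : ι → Fin n) :
    MeasurableSet (gridCell w) := by
  rw [gridCell, Set.ofPred_forall]
  refine MeasurableSet.iInter fun i => ?_
  exact measurableSet_eq_fun (by fun_prop) measurable_const

lemma pairwise_disjoint_gridCell {ι : Type*} :
    Pairwise (Function.onFun Disjoint (gridCell : (ι → Fin n) → Set (ι → ℝ))) := by
  intro v w hvw
  refine Set.disjoint_left.mpr fun t hv hw => hvw (funext fun i => Fin.ext ?_)
  exact_mod_cast (hv i).symm.trans (hw i)

lemma preimage_gridPoint_add_gridCell {ι : Type*} (w : ι → Fin n) :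
    (gridPoint w + ·) ⁻¹' gridCell w
      = Set.univ.pi fun _ => Set.Ico (-(1 / (2 * n)) : ℝ) (1 / (2 * n)) := by
  ext s
  simp only [gridCell, Set.mem_preimage, Set.mem_ofPred_eq, Set.mem_univ_pi, gridPoint,
    Pi.add_apply, Set.mem_Ico]
  refine forall_congr' fun i => ?_
  have hn : (0 : ℝ) < n := by exact_mod_cast (w i).pos
  have hshift : (n : ℝ) * ((w i : ℕ) / n + s i) + 1 / 2
      = n * s i + 1 / 2 + (((w i : ℕ) : ℤ) : ℝ) := by
    push_cast
    field_simp
    ring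
  rw [hshift, Int.floor_add_intCast, add_eq_right, Int.floor_eq_zero_iff, Set.mem_Ico, ← neg_div,
    div_le_iff₀ (by positivity), lt_div_iff₀ (by positivity)]
  constructor <;> rintro ⟨hleft, hright⟩ <;> constructor <;> linarith

lemma preimage_gridPoint_add_gridCell_ae_eq (w : ι → Fin n) :
    (gridPoint w + ·) ⁻¹' gridCell w =ᵐ[volume] closedBall (0 : ι → ℝ) (1 / (2 * n)) := by
  rw [preimage_gridPoint_add_gridCell, closedBall_pi _ (by positivity), volume_pi]
  simp only [Real.closedBall_eq_Icc, Pi.zero_apply, zero_sub, zero_add, Set.pi_univ_Icc]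
  exact Measure.univ_pi_Ico_ae_eq_Icc

lemma mem_iUnion_gridCell {ι : Type*} {t : ι → ℝ} :
    t ∈ ⋃ w : ι → Fin n, gridCell w ↔ ∀ i, (n : ℝ) * t i + 1 / 2 ∈ Set.Ico (0 : ℝ) n := by
  simp only [gridCell, Set.mem_iUnion, Set.mem_ofPred_eq]
  constructor
  · rintro ⟨w, hw⟩ i
    obtain ⟨hlower, hupper⟩ := Int.floor_eq_iff.mp (hw i)
    have hlt : ((w i : ℕ) : ℝ) + 1 ≤ n := by exact_mod_cast (w i).is_lt
    push_cast at hlower hupper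
    exact ⟨(Nat.cast_nonneg _).trans hlower, hupper.trans_le hlt⟩
  · intro ht
    choose k hk using fun i => Int.eq_ofNat_of_zero_le (Int.floor_nonneg.mpr (ht i).1)
    refine ⟨fun i => ⟨k i, ?_⟩, hk⟩
    have := hk i ▸ Int.floor_lt.mpr ((ht i).2.trans_eq (Int.cast_natCast n).symm)
    exact_mod_cast this

lemma iUnion_gridCell (hn : 0 < n) :
    ⋃ w : ι → Fin n, gridCell w
      = (fun _ => -(1 / (2 * n)) : ι → ℝ) +ᵥ ZSpan.fundamentalDomain (Pi.basisFun ℝ ι) := by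
  have hn' : (0 : ℝ) < n := by exact_mod_cast hn
  ext t
  rw [mem_iUnion_gridCell, Set.mem_vadd_set_iff_neg_vadd_mem, ZSpan.mem_fundamentalDomain]
  refine forall_congr' fun i => ?_
  have hscale : (n : ℝ) * t i + 1 / 2 = n * (1 / (2 * n) + t i) := by
    field_simp
    ring
  simp only [Pi.basisFun_repr, vadd_eq_add, Pi.add_apply, Pi.neg_apply, neg_neg, Set.mem_Ico,
    hscale, mul_nonneg_iff_of_pos_left hn', mul_lt_iff_lt_one_right hn']

lemma setIntegral_Icc_eq_sum_cells [DecidableEq ι] (hn : 0 < n)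
    (hF : ∀ (z : ι → ℤ) t, F ((fun i => (z i : ℝ)) + t) = F t)
    (hint : ∀ w : ι → Fin n,
      IntegrableOn (fun s => F (gridPoint w + s)) (closedBall 0 (1 / (2 * n)))) :
    ∫ t in Set.Icc 0 1, F t
      = ∑ w : ι → Fin n, ∫ s in closedBall 0 (1 / (2 * n)), F (gridPoint w + s) := by
  have hemb (w : ι → Fin n) : MeasurableEmbedding (gridPoint w + ·) := measurableEmbedding_addLeft _
  have hmp (w : ι → Fin n) : MeasurePreserving (gridPoint w + ·) volume volume :=
    measurePreserving_add_left _ _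
  have hcell (w : ι → Fin n) : ∫ s in closedBall 0 (1 / (2 * n)), F (gridPoint w + s)
      = ∫ t in gridCell w, F t := by
    rw [← setIntegral_congr_set (preimage_gridPoint_add_gridCell_ae_eq w)]
    exact (hmp w).setIntegral_preimage_emb (hemb w) F _
  have hintCell (w : ι → Fin n) : IntegrableOn F (gridCell w) := by
    rw [← (hmp w).integrableOn_comp_preimage (hemb w)]
    exact (hint w).congr_set_ae (preimage_gridPoint_add_gridCell_ae_eq w)
  simp only [hcell]
  rw [← integral_iUnion_fintype measurableSet_gridCell pairwise_disjoint_gridCell hintCell,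
    iUnion_gridCell hn, ← setIntegral_Icc_eq_vadd_fundamentalDomain hF]

end GridDecomposition

section RadialIntegral

open Metric Module

variable {E : Type*} [NormedAddCommGroup E] [NormedSpace ℝ E] [FiniteDimensional ℝ E]
  [MeasurableSpace E] [BorelSpace E] (μ : Measure E) [μ.IsAddHaarMeasure] (R : ℝ)

lemma pow_pred_smul_one_div_sq {d : ℕ} (hd : 2 < d) {y : ℝ} (hy : 0 < y) :
    y ^ (d - 1) • (1 / y ^ 2) = y ^ (d - 3) := by
  obtain ⟨k, rfl⟩ := Nat.exists_eq_add_of_lt hd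
  rw [show 2 + k + 1 - 1 = k + 2 by omega, show 2 + k + 1 - 3 = k by omega, smul_eq_mul, pow_add]
  field_simp

lemma integrableOn_ball_one_div_norm_sq (hd : 2 < finrank ℝ E) :
    IntegrableOn (fun x => 1 / ‖x‖ ^ 2) (ball 0 R) μ := by
  have : Nontrivial E := nontrivial_of_finrank_pos (R := ℝ) (by omega)
  rw [integrableOn_fun_norm_addHaar μ (f := fun y => 1 / y ^ 2),
    integrableOn_congr_fun (fun y hy => pow_pred_smul_one_div_sq hd hy.1) measurableSet_Ioo]
  exact (ContinuousOn.integrableOn_compact isCompact_Icc (by fun_prop)).mono_set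
    Set.Ioo_subset_Icc_self

variable {R}

lemma setIntegral_ball_one_div_norm_sq (hd : 2 < finrank ℝ E) (hR : 0 ≤ R) :
    ∫ x in ball 0 R, 1 / ‖x‖ ^ 2 ∂μ
      = finrank ℝ E / (finrank ℝ E - 2) * μ.real (ball 0 1) * R ^ (finrank ℝ E - 2) := by
  have : Nontrivial E := nontrivial_of_finrank_pos (R := ℝ) (by omega)
  have hindicator : (ball (0 : E) R).indicator (fun x => 1 / ‖x‖ ^ 2)
      = fun x => (Set.Iio R).indicator (fun y => 1 / y ^ 2) ‖x‖ := by
    ext x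
    simp [Set.indicator_apply]
  have hradial : ∀ y ∈ Set.Ioi (0 : ℝ),
      y ^ (finrank ℝ E - 1) • (Set.Iio R).indicator (fun y => 1 / y ^ 2) y
        = (Set.Iio R).indicator (fun y => y ^ (finrank ℝ E - 3)) y := by
    intro y hy
    simp only [Set.indicator_apply, smul_ite, smul_zero, pow_pred_smul_one_div_sq hd hy]
  rw [← integral_indicator measurableSet_ball, hindicator, integral_fun_norm_addHaar,
    setIntegral_congr_fun measurableSet_Ioi hradial, setIntegral_indicator measurableSet_Iio,
    Set.Ioi_inter_Iio, ← integral_Ioc_eq_integral_Ioo, ← intervalIntegral.integral_of_le hR,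
    integral_pow]
  obtain ⟨k, hk⟩ := Nat.exists_eq_add_of_lt hd
  simp only [hk, show 2 + k + 1 - 3 = k by omega, show 2 + k + 1 - 2 = k + 1 by omega,
    nsmul_eq_mul, smul_eq_mul, zero_pow k.succ_ne_zero, sub_zero]
  rw [show ((2 + k + 1 : ℕ) : ℝ) - 2 = k + 1 by push_cast; ring]
  ring

end RadialIntegral

section ZeroCell

open scoped Real
open Metric Module

variable {ι : Type*} [Fintype ι] {h : ℝ}

lemma distLatticeSq_eq_sum_sq {s : ι → ℝ} (hs : ‖s‖ ≤ 1 / 2) : distLatticeSq s = ∑ i, s i ^ 2 := by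
  refine Finset.sum_congr rfl fun i _ => ?_
  rw [(AddCircle.norm_coe_eq_abs_iff 1 one_ne_zero).mpr
    ((norm_le_pi_norm s i).trans (by simpa using hs)), sq_abs]

lemma sq_pi_norm_le_sum_sq (s : ι → ℝ) : ‖s‖ ^ 2 ≤ ∑ i, s i ^ 2 := by
  have hle : ‖s‖ ≤ √(∑ i, s i ^ 2) :=
    (pi_norm_le_iff_of_nonneg (Real.sqrt_nonneg _)).mpr fun i => Real.abs_le_sqrt <|
      Finset.single_le_sum (fun j _ => sq_nonneg (s j)) (Finset.mem_univ i)
  exact (Real.le_sqrt (norm_nonneg s) (by positivity)).mp hle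

lemma one_div_latticeSymbol_le_one_div_norm_sq {s : ι → ℝ} (hs : ‖s‖ ≤ 1 / 2) :
    1 / latticeSymbol s ≤ 1 / (4 * π ^ 2) * (1 / ‖s‖ ^ 2) + 1 / 4 := by
  rcases eq_or_ne s 0 with rfl | hs0
  · simp [latticeSymbol]
  · have : 0 < ‖s‖ := norm_pos_iff.mpr hs0
    refine (one_div_latticeSymbol_le s).trans ?_
    rw [distLatticeSq_eq_sum_sq hs, one_div_mul_one_div]
    gcongr
    exact sq_pi_norm_le_sum_sq s

lemma ball_ae_eq_closedBall {E : Type*} [NormedAddCommGroup E] [NormedSpace ℝ E]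
    [FiniteDimensional ℝ E] [Nontrivial E] [MeasurableSpace E] [BorelSpace E] (μ : Measure E)
    [μ.IsAddHaarMeasure] (x : E) (r : ℝ) : ball x r =ᵐ[μ] closedBall x r :=
  ae_eq_of_subset_of_measure_ge ball_subset_closedBall
    (Measure.addHaar_closedBall_eq_addHaar_ball μ x r).le measurableSet_ball.nullMeasurableSet
    measure_closedBall_lt_top.ne

lemma integrableOn_closedBall_one_div_norm_sq (hd : 2 < Fintype.card ι) (h : ℝ) :
    IntegrableOn (fun s : ι → ℝ => 1 / ‖s‖ ^ 2) (closedBall 0 h) := by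
  have : Nonempty ι := Fintype.card_pos_iff.mp (by omega)
  refine (integrableOn_ball_one_div_norm_sq volume h ?_).congr_set_ae
    (ball_ae_eq_closedBall volume 0 h).symm
  rwa [finrank_fintype_fun_eq_card]

lemma setIntegral_closedBall_one_div_norm_sq (hd : 2 < Fintype.card ι) (hh : 0 ≤ h) :
    ∫ s in closedBall (0 : ι → ℝ) h, 1 / ‖s‖ ^ 2
      = Fintype.card ι / (Fintype.card ι - 2) * 2 ^ Fintype.card ι * h ^ (Fintype.card ι - 2) := by
  have : Nonempty ι := Fintype.card_pos_iff.mp (by omega)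
  have hball : volume.real (ball (0 : ι → ℝ) 1) = 2 ^ Fintype.card ι := by
    rw [measureReal_congr (ball_ae_eq_closedBall volume 0 1),
      volume_real_pi_closedBall zero_le_one, mul_one]
  rw [← setIntegral_congr_set (ball_ae_eq_closedBall volume 0 h),
    setIntegral_ball_one_div_norm_sq volume (by rwa [finrank_fintype_fun_eq_card]) hh,
    finrank_fintype_fun_eq_card, hball]

lemma integrableOn_one_div_latticeSymbol_zeroCell (hd : 2 < Fintype.card ι) (hh : h ≤ 1 / 2) :
    IntegrableOn (fun s : ι → ℝ => 1 / latticeSymbol s) (closedBall 0 h) := by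
  have hconst : IntegrableOn (fun _ : ι → ℝ => (1 / 4 : ℝ)) (closedBall 0 h) :=
    integrableOn_const measure_closedBall_lt_top.ne
  refine Integrable.mono'
    (((integrableOn_closedBall_one_div_norm_sq hd h).const_mul (1 / (4 * π ^ 2))).add hconst)
    (measurable_const.div continuous_latticeSymbol.measurable).aestronglyMeasurable
    (ae_restrict_of_forall_mem measurableSet_closedBall fun s hs => ?_)
  rw [Real.norm_of_nonneg (one_div_nonneg.mpr (latticeSymbol_nonneg s))]
  exact one_div_latticeSymbol_le_one_div_norm_sq ((mem_closedBall_zero_iff.mp hs).trans hh)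

lemma setIntegral_one_div_latticeSymbol_zeroCell_le (hd : 2 < Fintype.card ι)
    (hh : 0 ≤ h) (hh' : h ≤ 1 / 2) :
    ∫ s in closedBall (0 : ι → ℝ) h, 1 / latticeSymbol s
      ≤ 1 / (4 * π ^ 2) * (Fintype.card ι / (Fintype.card ι - 2) * 2 ^ Fintype.card ι
          * h ^ (Fintype.card ι - 2)) + (2 * h) ^ Fintype.card ι * (1 / 4) := by
  have hconst : IntegrableOn (fun _ : ι → ℝ => (1 / 4 : ℝ)) (closedBall 0 h) :=
    integrableOn_const measure_closedBall_lt_top.ne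
  have hint := (integrableOn_closedBall_one_div_norm_sq hd h).const_mul (1 / (4 * π ^ 2))
  have hmono := setIntegral_mono_on (integrableOn_one_div_latticeSymbol_zeroCell hd hh')
    (hint.add hconst) measurableSet_closedBall fun s hs =>
      one_div_latticeSymbol_le_one_div_norm_sq ((mem_closedBall_zero_iff.mp hs).trans hh')
  refine hmono.trans_eq ?_
  rw [Pi.add_def, integral_add hint hconst, integral_const_mul,
    setIntegral_closedBall_one_div_norm_sq hd hh, setIntegral_const, volume_real_pi_closedBall hh,
    smul_eq_mul]

lemma le_setIntegral_one_div_latticeSymbol_zeroCell (hd : 2 < Fintype.card ι)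
    (hh : 0 ≤ h) (hh' : h ≤ 1 / 2) :
    1 / (4 * π ^ 2) * (Fintype.card ι / (Fintype.card ι - 2)
        * volume.real (ball (0 : EuclideanSpace ℝ ι) 1) * h ^ (Fintype.card ι - 2))
      ≤ ∫ s in closedBall (0 : ι → ℝ) h, 1 / latticeSymbol s := by
  set B : Set (ι → ℝ) := WithLp.toLp 2 ⁻¹' ball (0 : EuclideanSpace ℝ ι) h
  have hmeas : MeasurableSet B := (WithLp.measurable_toLp 2 _) measurableSet_ball
  have hnorm (s : ι → ℝ) : ‖WithLp.toLp 2 s‖ ^ 2 = ∑ i, s i ^ 2 := EuclideanSpace.real_norm_sq_eq _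
  have hsub : B ⊆ closedBall 0 h := fun s hs => mem_closedBall_zero_iff.mpr <|
    (abs_le_of_sq_le_sq' ((sq_pi_norm_le_sum_sq s).trans_eq (hnorm s).symm)
      (norm_nonneg _)).2.trans (mem_ball_zero_iff.mp hs).le
  have hpreserving := PiLp.volume_preserving_toLp ι
  have hemb := (MeasurableEquiv.toLp 2 (ι → ℝ)).measurableEmbedding
  have hfinrank : finrank ℝ (EuclideanSpace ℝ ι) = Fintype.card ι := finrank_euclideanSpace
  have hint : IntegrableOn (fun s => 1 / ‖WithLp.toLp 2 s‖ ^ 2) B :=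
    (hpreserving.integrableOn_comp_preimage hemb).mpr
      (integrableOn_ball_one_div_norm_sq volume h (hfinrank.symm ▸ hd))
  have hvalue := setIntegral_ball_one_div_norm_sq (E := EuclideanSpace ℝ ι) volume
    (hfinrank.symm ▸ hd) hh
  rw [hfinrank, ← hpreserving.setIntegral_preimage_emb hemb] at hvalue
  have hintE := integrableOn_one_div_latticeSymbol_zeroCell hd hh'
  rw [← hvalue, ← integral_const_mul]
  calc ∫ s in B, 1 / (4 * π ^ 2) * (1 / ‖WithLp.toLp 2 s‖ ^ 2)
      ≤ ∫ s in B, 1 / latticeSymbol s := by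
        refine setIntegral_mono_on (hint.const_mul _) (hintE.mono_set hsub) hmeas fun s hs => ?_
        rw [hnorm, one_div_mul_one_div,
          ← distLatticeSq_eq_sum_sq ((mem_closedBall_zero_iff.mp (hsub hs)).trans hh')]
        exact one_div_distLatticeSq_le s
    _ ≤ ∫ s in closedBall (0 : ι → ℝ) h, 1 / latticeSymbol s :=
        setIntegral_mono_set hintE
          (ae_of_all _ fun s => one_div_nonneg.mpr (latticeSymbol_nonneg s)) hsub.eventuallyLE

end ZeroCell

section LatticeSum

open scoped Real

variable {ι : Type*} [Fintype ι] [DecidableEq ι]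

/-- The sum `∑ |k|⁻⁴` over the box `{-N, …, N}^ι`, a truncated Epstein zeta function; the origin
contributes `1 / 0 = 0`. -/
def invFourthPowerBoxSum (ι : Type*) [Fintype ι] [DecidableEq ι] (N : ℕ) : ℝ :=
  ∑ k ∈ Finset.Icc (fun _ : ι => -(N : ℤ)) fun _ => (N : ℤ), 1 / (∑ i, (k i : ℝ) ^ 2) ^ 2

lemma card_Icc_neg_const (N : ℕ) :
    (Finset.Icc (fun _ : ι => -(N : ℤ)) fun _ => (N : ℤ)).card = (2 * N + 1) ^ Fintype.card ι := by
  rw [Pi.card_Icc]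
  simp only [Int.card_Icc, Finset.prod_const, Finset.card_univ]
  congr
  omega

lemma succ_sq_le_sum_sq {N : ℕ} {k : ι → ℤ}
    (hk : k ∉ Finset.Icc (fun _ : ι => -(N : ℤ)) fun _ => (N : ℤ)) :
    ((N : ℝ) + 1) ^ 2 ≤ ∑ i, (k i : ℝ) ^ 2 := by
  obtain ⟨i, hi⟩ : ∃ i, (N : ℤ) + 1 ≤ |k i| := by
    by_contra! hlt
    have hbox (i : ι) : -(N : ℤ) ≤ k i ∧ k i ≤ N := abs_le.mp (Int.lt_add_one_iff.mp (hlt i))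
    exact hk (Finset.mem_Icc.mpr ⟨fun i => (hbox i).1, fun i => (hbox i).2⟩)
  have hi' : (N : ℝ) + 1 ≤ |(k i : ℝ)| := by exact_mod_cast hi
  calc ((N : ℝ) + 1) ^ 2 ≤ (k i : ℝ) ^ 2 := sq_le_sq.mpr (by rwa [abs_of_nonneg (by positivity)])
    _ ≤ ∑ i, (k i : ℝ) ^ 2 :=
      Finset.single_le_sum (fun j _ => sq_nonneg (k j : ℝ)) (Finset.mem_univ i)

lemma invFourthPowerBoxSum_succ_le (N : ℕ) :
    invFourthPowerBoxSum ι (N + 1) ≤ invFourthPowerBoxSum ι N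
      + ((2 * N + 3) ^ Fintype.card ι - (2 * N + 1) ^ Fintype.card ι) / (N + 1) ^ 4 := by
  set box : ℕ → Finset (ι → ℤ) := fun N => Finset.Icc (fun _ => -(N : ℤ)) fun _ => (N : ℤ)
  have hsub : box N ⊆ box (N + 1) :=
    Finset.Icc_subset_Icc (fun _ => by push_cast; omega) (fun _ => by push_cast; omega)
  have hshell : ∑ k ∈ box (N + 1) \ box N, 1 / (∑ i, (k i : ℝ) ^ 2) ^ 2
      ≤ (box (N + 1) \ box N).card • (1 / ((N : ℝ) + 1) ^ 4) := by
    refine Finset.sum_le_card_nsmul _ _ _ fun k hk => ?_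
    rw [show ((N : ℝ) + 1) ^ 4 = (((N : ℝ) + 1) ^ 2) ^ 2 by ring]
    have := succ_sq_le_sum_sq (Finset.mem_sdiff.mp hk).2
    gcongr
  have hcard : ((box (N + 1) \ box N).card : ℝ)
      = (2 * N + 3) ^ Fintype.card ι - (2 * N + 1) ^ Fintype.card ι := by
    rw [Finset.cast_card_sdiff hsub, card_Icc_neg_const, card_Icc_neg_const]
    push_cast
    ring
  rw [nsmul_eq_mul, hcard, mul_one_div] at hshell
  have hsplit := Finset.sum_sdiff (f := fun k : ι → ℤ => 1 / (∑ i, (k i : ℝ) ^ 2) ^ 2) hsub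
  simp only [invFourthPowerBoxSum]
  linarith

lemma invFourthPowerBoxSum_fin_three (N : ℕ) :
    invFourthPowerBoxSum (Fin 3) N = ∑ a ∈ Finset.Icc (-(N : ℤ)) N, ∑ b ∈ Finset.Icc (-(N : ℤ)) N,
      ∑ c ∈ Finset.Icc (-(N : ℤ)) N, 1 / ((a : ℝ) ^ 2 + b ^ 2 + c ^ 2) ^ 2 := by
  simp only [← Finset.sum_product', invFourthPowerBoxSum, Fin.sum_univ_three]
  refine Finset.sum_nbij' (fun k => (k 0, k 1, k 2)) (fun p => ![p.1, p.2.1, p.2.2]) ?_ ?_ ?_ ?_ ?_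
  · simp +contextual [Pi.le_def, Fin.forall_fin_succ]
  · simp +contextual [Pi.le_def, Fin.forall_fin_succ]
  · intro k _
    ext i
    fin_cases i <;> rfl
  · simp
  · simp

lemma invFourthPowerBoxSum_fin_three_two_le : invFourthPowerBoxSum (Fin 3) 2 ≤ 1244 / 100 := by
  have hIcc : Finset.Icc (-((2 : ℕ) : ℤ)) (2 : ℕ) = {-2, -1, 0, 1, 2} := by decide
  rw [invFourthPowerBoxSum_fin_three, hIcc]
  norm_num

lemma invFourthPowerBoxSum_fin_three_le_sub {N : ℕ} (hN : 2 ≤ N) :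
    invFourthPowerBoxSum (Fin 3) N ≤ 2204 / 100 - 24 / (N + 1 / 2) := by
  induction N, hN using Nat.le_induction with
  | base => exact invFourthPowerBoxSum_fin_three_two_le.trans (by norm_num)
  | succ N hN ih =>
    have hshell : ((2 * N + 3) ^ 3 - (2 * N + 1) ^ 3) / ((N : ℝ) + 1) ^ 4
        ≤ 24 / (N + 1 / 2) - 24 / (N + 1 + 1 / 2) := by
      rw [div_sub_div _ _ (by positivity) (by positivity),
        div_le_div_iff₀ (by positivity) (by positivity)]
      have := Nat.cast_nonneg (α := ℝ) N
      nlinarith [pow_nonneg this 3]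
    have hsucc := invFourthPowerBoxSum_succ_le (ι := Fin 3) N
    rw [Fintype.card_fin] at hsucc
    push_cast
    linarith

lemma invFourthPowerBoxSum_fin_three_le {N : ℕ} (hN : 2 ≤ N) :
    invFourthPowerBoxSum (Fin 3) N ≤ 2204 / 100 :=
  (invFourthPowerBoxSum_fin_three_le_sub hN).trans (sub_le_self _ (by positivity))

lemma sq_one_div_latticeSymbol_le {ι : Type*} [Fintype ι] {ε : ℝ} (hε : 0 < ε) (t : ι → ℝ) :
    (1 / latticeSymbol t) ^ 2
      ≤ (1 + ε) / (16 * π ^ 4) * (1 / distLatticeSq t ^ 2) + (1 + 1 / ε) / 16 := by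
  set a := 1 / (4 * π ^ 2 * distLatticeSq t) with ha
  have hyoung : 0 ≤ (ε * a - 1 / 4) ^ 2 / ε := by positivity
  calc (1 / latticeSymbol t) ^ 2 ≤ (a + 1 / 4) ^ 2 := by
        have := one_div_nonneg.mpr (latticeSymbol_nonneg t)
        gcongr
        exact one_div_latticeSymbol_le t
    _ = (1 + ε) * a ^ 2 + (1 + 1 / ε) / 16 - (ε * a - 1 / 4) ^ 2 / ε := by
        field_simp
        ring
    _ ≤ (1 + ε) * a ^ 2 + (1 + 1 / ε) / 16 := sub_le_self _ hyoung
    _ = _ := by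
        rw [ha]
        ring

variable {n : ℕ}

lemma sum_one_div_sq_distLatticeSq_gridPoint_le (hn : 0 < n) :
    ∑ w : ι → Fin n, 1 / distLatticeSq (gridPoint w) ^ 2 ≤ n ^ 4 * invFourthPowerBoxSum ι n := by
  set box := Finset.Icc (fun _ : ι => -(n : ℤ)) fun _ => (n : ℤ)
  set rep : (ι → Fin n) → ι → ℤ := fun w i => ((w i : ℕ) : ℤ).bmod n
  have hinj : Function.Injective rep := fun v w hvw =>
    funext fun i => injective_bmod_coe_fin (congrFun hvw i)
  have hmem (w : ι → Fin n) : rep w ∈ box := by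
    refine Finset.mem_Icc.mpr ⟨fun i => ?_, fun i => ?_⟩
    · change -(n : ℤ) ≤ ((w i : ℕ) : ℤ).bmod n
      have := Int.le_bmod (x := ((w i : ℕ) : ℤ)) hn
      omega
    · change ((w i : ℕ) : ℤ).bmod n ≤ (n : ℤ)
      have := Int.bmod_lt (x := ((w i : ℕ) : ℤ)) hn
      omega
  calc ∑ w : ι → Fin n, 1 / distLatticeSq (gridPoint w) ^ 2
      = (n : ℝ) ^ 4 * ∑ w, 1 / (∑ i, (rep w i : ℝ) ^ 2) ^ 2 := by
        rw [Finset.mul_sum]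
        refine Finset.sum_congr rfl fun w _ => ?_
        rw [distLatticeSq_gridPoint hn, div_pow, one_div_div, ← pow_mul, mul_one_div]
    _ = (n : ℝ) ^ 4 * ∑ k ∈ Finset.univ.image rep, 1 / (∑ i, (k i : ℝ) ^ 2) ^ 2 := by
        rw [Finset.sum_image hinj.injOn]
    _ ≤ (n : ℝ) ^ 4 * invFourthPowerBoxSum ι n := by
        gcongr
        refine Finset.sum_le_sum_of_subset_of_nonneg ?_ fun k _ _ => by positivity
        exact Finset.image_subset_iff.mpr fun w _ => hmem w

lemma sum_sq_one_div_latticeSymbol_gridPoint_le {ε : ℝ} (hε : 0 < ε) (hn : 0 < n) :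
    ∑ w : ι → Fin n, (1 / latticeSymbol (gridPoint w)) ^ 2
      ≤ (1 + ε) / (16 * π ^ 4) * (n ^ 4 * invFourthPowerBoxSum ι n)
        + n ^ Fintype.card ι * ((1 + 1 / ε) / 16) := by
  refine (Finset.sum_le_sum fun w _ => sq_one_div_latticeSymbol_le hε (gridPoint w)).trans ?_
  rw [Finset.sum_add_distrib, ← Finset.mul_sum, Finset.sum_const, Finset.card_univ,
    Fintype.card_fun, Fintype.card_fin, nsmul_eq_mul, Nat.cast_pow]
  gcongr
  exact sum_one_div_sq_distLatticeSq_gridPoint_le hn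

end LatticeSum

section GreenFunctions

open Metric
open scoped Real

variable {d n : ℕ}

lemma betaC_eq_integral (d : ℕ) :
    betaC d = ∫ t in Set.Icc (0 : Fin d → ℝ) 1, 1 / latticeSymbol t := by
  simp [betaC, greenZ, massGreenZ, latticeSymbol]

lemma eta_eq_latticeSymbol (w : Fin d → Fin n) : eta d n w = latticeSymbol (gridPoint w) := by
  simp only [eta, latticeSymbol, gridPoint, mul_div_assoc]

/-- The nonzero frequencies `w ∈ {0, …, n - 1}^d`, over which `torusGreen0 d n` is summed. -/
def nonzeroIndices (d n : ℕ) : Finset (Fin d → Fin n) :=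
  {w | ∃ i, (w i : ℕ) ≠ 0}

lemma mem_nonzeroIndices {w : Fin d → Fin n} : w ∈ nonzeroIndices d n ↔ ∃ i, (w i : ℕ) ≠ 0 := by
  simp [nonzeroIndices]

lemma nonzeroIndices_eq_compl (hn : 0 < n) : nonzeroIndices d n = {fun _ => ⟨0, hn⟩}ᶜ := by
  ext w
  simp [mem_nonzeroIndices, Function.ne_iff, Fin.ext_iff]

lemma one_div_two_mul_natCast_le_half (n : ℕ) : 1 / (2 * (n : ℝ)) ≤ 1 / 2 := by
  have := Nat.cast_inv_le_one (α := ℝ) n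
  rw [one_div, mul_inv]
  linarith

lemma torusGreen0_self (x : Fin d → ZMod n) :
    torusGreen0 d n x x = (1 / n) ^ d *
      ∑ w ∈ nonzeroIndices d n, 1 / latticeSymbol (gridPoint w) := by
  simp [torusGreen0, nonzeroIndices, eta_eq_latticeSymbol]

lemma betaC_eq_zeroCell_add_sum_cells (hd : 2 < d) (hn : 0 < n) :
    betaC d = (∫ s in closedBall (0 : Fin d → ℝ) (1 / (2 * n)), 1 / latticeSymbol s)
      + ∑ w ∈ nonzeroIndices d n,
          ∫ s in closedBall 0 (1 / (2 * n)), 1 / latticeSymbol (gridPoint w + s) := by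
  set w₀ : Fin d → Fin n := fun _ => ⟨0, hn⟩
  have hw₀ : gridPoint w₀ = 0 := by
    ext i
    simp [gridPoint, w₀]
  have hcompl : nonzeroIndices d n = {w₀}ᶜ := nonzeroIndices_eq_compl hn
  have hint (w : Fin d → Fin n) :
      IntegrableOn (fun s => 1 / latticeSymbol (gridPoint w + s)) (closedBall 0 (1 / (2 * n))) := by
    rcases eq_or_ne w w₀ with rfl | hw
    · simpa only [hw₀, zero_add] using
        integrableOn_one_div_latticeSymbol_zeroCell (by rwa [Fintype.card_fin])
          (one_div_two_mul_natCast_le_half n)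
    · exact integrableOn_one_div_latticeSymbol_cell
        (mem_nonzeroIndices.mp (by simpa [hcompl] using hw))
  rw [betaC_eq_integral, setIntegral_Icc_eq_sum_cells hn
    (fun z t => by rw [latticeSymbol_intCast_add]) hint,
    Fintype.sum_eq_add_sum_compl w₀, hw₀, hcompl]
  simp only [zero_add]

lemma le_betaC_sub_torusGreen0 (hd : 2 < d) (hn : 0 < n) (x : Fin d → ZMod n) :
    1 / (4 * π ^ 2) * (d / (d - 2) * volume.real (ball (0 : EuclideanSpace ℝ (Fin d)) 1)
          * (1 / (2 * n)) ^ (d - 2))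
        - (1 / n) ^ d * (π ^ 2 * d / (3 * n ^ 2)
          * ∑ w : Fin d → Fin n, (1 / latticeSymbol (gridPoint w)) ^ 2)
      ≤ betaC d - torusGreen0 d n x x := by
  have hzero := le_setIntegral_one_div_latticeSymbol_zeroCell (ι := Fin d)
    (by rwa [Fintype.card_fin]) (by positivity) (one_div_two_mul_natCast_le_half n)
  have hcells := Finset.sum_le_sum (s := nonzeroIndices d n) fun w hw =>
    le_setIntegral_one_div_latticeSymbol_cell (mem_nonzeroIndices.mp hw)
  simp only [Fintype.card_fin, ← Finset.mul_sum, Finset.sum_sub_distrib] at hzero hcells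
  have herror : (1 / n : ℝ) ^ d * (π ^ 2 * d / (3 * n ^ 2)
        * ∑ w ∈ nonzeroIndices d n, (1 / latticeSymbol (gridPoint w)) ^ 2)
      ≤ (1 / n) ^ d * (π ^ 2 * d / (3 * n ^ 2)
        * ∑ w : Fin d → Fin n, (1 / latticeSymbol (gridPoint w)) ^ 2) := by
    gcongr
    exact Finset.subset_univ _
  rw [mul_sub] at hcells
  rw [betaC_eq_zeroCell_add_sum_cells hd hn, torusGreen0_self]
  linarith

lemma betaC_sub_torusGreen0_le (hd : 2 < d) (hn : 0 < n) (x : Fin d → ZMod n) :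
    betaC d - torusGreen0 d n x x
      ≤ 1 / (4 * π ^ 2) * (d / (d - 2) * 2 ^ d * (1 / (2 * n)) ^ (d - 2)) + (1 / n) ^ d * (1 / 4)
        + (1 / n) ^ d * ((π ^ 2 * d / (3 * n ^ 2) + 2 * π ^ 2 * d * (5 + d) / n ^ 2)
          * ∑ w : Fin d → Fin n, (1 / latticeSymbol (gridPoint w)) ^ 2) := by
  have hzero := setIntegral_one_div_latticeSymbol_zeroCell_le (ι := Fin d)
    (by rwa [Fintype.card_fin]) (by positivity) (one_div_two_mul_natCast_le_half n)
  have hcells := Finset.sum_le_sum (s := nonzeroIndices d n) fun w hw =>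
    setIntegral_one_div_latticeSymbol_cell_le (mem_nonzeroIndices.mp hw)
  rw [show 2 * (1 / (2 * (n : ℝ))) = 1 / n by ring] at hzero
  simp only [Fintype.card_fin, ← Finset.mul_sum, Finset.sum_add_distrib] at hzero hcells
  have herror : (1 / n : ℝ) ^ d * ((π ^ 2 * d / (3 * n ^ 2) + 2 * π ^ 2 * d * (5 + d) / n ^ 2)
        * ∑ w ∈ nonzeroIndices d n, (1 / latticeSymbol (gridPoint w)) ^ 2)
      ≤ (1 / n) ^ d * ((π ^ 2 * d / (3 * n ^ 2) + 2 * π ^ 2 * d * (5 + d) / n ^ 2)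
        * ∑ w : Fin d → Fin n, (1 / latticeSymbol (gridPoint w)) ^ 2) := by
    gcongr
    exact Finset.subset_univ _
  rw [mul_add] at hcells
  rw [betaC_eq_zeroCell_add_sum_cells hd hn, torusGreen0_self]
  linarith

-- With `ε = 1 / 10`, the factor `(1 + ε) ∑ |k|⁻⁴ ≤ 1.1 * 22.04` stays below `8π`.
lemma sum_sq_one_div_latticeSymbol_fin_three_le (hn : 2 ≤ n) :
    ∑ w : Fin 3 → Fin n, (1 / latticeSymbol (gridPoint w)) ^ 2
      ≤ 6061 / (4000 * π ^ 4) * n ^ 4 + 11 / 16 * n ^ 3 := by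
  have hsum := sum_sq_one_div_latticeSymbol_gridPoint_le (ι := Fin 3) (ε := 1 / 10) (by norm_num)
    (by omega : 0 < n)
  rw [Fintype.card_fin] at hsum
  calc ∑ w : Fin 3 → Fin n, (1 / latticeSymbol (gridPoint w)) ^ 2
      ≤ (1 + 1 / 10) / (16 * π ^ 4) * (n ^ 4 * (2204 / 100))
        + n ^ 3 * ((1 + 1 / (1 / 10)) / 16) := by
        refine hsum.trans ?_
        gcongr
        exact invFourthPowerBoxSum_fin_three_le hn
    _ = 6061 / (4000 * π ^ 4) * n ^ 4 + 11 / 16 * n ^ 3 := by ring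

/-- The constant `δ` in the lower bound `δ / n - O(n⁻²)` for `betaC 3 - torusGreen0 3 n x x`: the
cell at the origin contributes `1 / (2π)`, and the other cells cost at most `6061 / (4000 π²)`. -/
def diagonalGapConst : ℝ :=
  1 / (2 * π) - 6061 / (4000 * π ^ 2)

lemma diagonalGapConst_pos : 0 < diagonalGapConst := by
  rw [diagonalGapConst, sub_pos, div_lt_div_iff₀ (by positivity) (by positivity)]
  nlinarith [Real.pi_gt_d2, Real.pi_pos]

lemma le_betaC_three_sub_torusGreen0 (hn : 2 ≤ n) (x : Fin 3 → ZMod n) :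
    diagonalGapConst / n - 11 * π ^ 2 / 16 / n ^ 2 ≤ betaC 3 - torusGreen0 3 n x x := by
  have : (0 : ℝ) < n := by positivity
  have hball : volume.real (ball (0 : EuclideanSpace ℝ (Fin 3)) 1) = π * 4 / 3 := by
    rw [measureReal_def, EuclideanSpace.volume_ball_fin_three]
    simp [ENNReal.toReal_ofReal (by positivity : 0 ≤ π * 4 / 3)]
  calc diagonalGapConst / n - 11 * π ^ 2 / 16 / n ^ 2
      = 1 / (4 * π ^ 2) * (3 / (3 - 2) * (π * 4 / 3) * (1 / (2 * n)) ^ 1)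
        - (1 / n) ^ 3 * (π ^ 2 * 3 / (3 * n ^ 2)
          * (6061 / (4000 * π ^ 4) * n ^ 4 + 11 / 16 * n ^ 3)) := by
        rw [diagonalGapConst]
        field_simp
        ring
    _ ≤ 1 / (4 * π ^ 2) * (3 / (3 - 2) * (π * 4 / 3) * (1 / (2 * n)) ^ 1)
        - (1 / n) ^ 3 * (π ^ 2 * 3 / (3 * n ^ 2)
          * ∑ w : Fin 3 → Fin n, (1 / latticeSymbol (gridPoint w)) ^ 2) := by
        gcongr
        exact sum_sq_one_div_latticeSymbol_fin_three_le hn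
    _ ≤ betaC 3 - torusGreen0 3 n x x := by
        simpa only [hball, Nat.cast_ofNat] using
          le_betaC_sub_torusGreen0 (d := 3) (by norm_num) (by omega) x

lemma betaC_three_sub_torusGreen0_le (hn : 2 ≤ n) (x : Fin 3 → ZMod n) :
    betaC 3 - torusGreen0 3 n x x ≤ 600 / n := by
  have : (0 : ℝ) < n := by positivity
  have hn1 : (1 : ℝ) ≤ n := by exact_mod_cast (by omega : 1 ≤ n)
  calc betaC 3 - torusGreen0 3 n x x
      ≤ 1 / (4 * π ^ 2) * (3 / (3 - 2) * 2 ^ 3 * (1 / (2 * n)) ^ 1) + (1 / n) ^ 3 * (1 / 4)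
        + (1 / n) ^ 3 * ((π ^ 2 * 3 / (3 * n ^ 2) + 2 * π ^ 2 * 3 * (5 + 3) / n ^ 2)
          * ∑ w : Fin 3 → Fin n, (1 / latticeSymbol (gridPoint w)) ^ 2) := by
        simpa only [Nat.cast_ofNat] using
          betaC_sub_torusGreen0_le (d := 3) (by norm_num) (by omega) x
    _ ≤ 1 / (4 * π ^ 2) * (3 / (3 - 2) * 2 ^ 3 * (1 / (2 * n)) ^ 1) + (1 / n) ^ 3 * (1 / 4)
        + (1 / n) ^ 3 * ((π ^ 2 * 3 / (3 * n ^ 2) + 2 * π ^ 2 * 3 * (5 + 3) / n ^ 2)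
          * (6061 / (4000 * π ^ 4) * n ^ 4 + 11 / 16 * n ^ 3)) := by
        gcongr
        exact sum_sq_one_div_latticeSymbol_fin_three_le hn
    _ = (3 / π ^ 2 + 49 * 6061 / (4000 * π ^ 2) + 1 / 4 / n ^ 2 + 539 * π ^ 2 / 16 / n) / n := by
        field_simp
        ring
    _ ≤ (3 / 3 ^ 2 + 49 * 6061 / (4000 * 3 ^ 2) + 1 / 4 / 1 ^ 2 + 539 * 4 ^ 2 / 16 / 1) / n := by
        gcongr
        · exact Real.pi_gt_three.le
        · exact Real.pi_gt_three.le
        · exact Real.pi_le_four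
    _ ≤ 600 / n := by
        gcongr
        norm_num

end GreenFunctions

/-- In dimension `3`, the diagonal of the zero-average Green's function on
the torus lies strictly below the lattice Green's function at distance of order `1/n`:
there are `c, C > 0` with `−C/n ≤ G_n^0(0,0) − G_{ℤ³}(0,0) ≤ −c/n` for all large `n`. -/
theorem zero_average_green_diagonal_negative_3d :
    ∃ c C : ℝ, 0 < c ∧ 0 < C ∧ ∃ n0 : ℕ, ∀ n : ℕ, n0 ≤ n →
      -C / n ≤ torusGreen0 3 n (fun _ => 0) (fun _ => 0) - betaC 3 ∧
      torusGreen0 3 n (fun _ => 0) (fun _ => 0) - betaC 3 ≤ -c / n := by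
  set c : ℝ := diagonalGapConst / 2
  have hc : 0 < c := half_pos diagonalGapConst_pos
  refine ⟨c, 600, hc, by norm_num, max 2 ⌈11 * Real.pi ^ 2 / 16 / c⌉₊, fun n hn => ?_⟩
  obtain ⟨hn2, hceil⟩ := max_le_iff.mp hn
  have hn0 : (0 : ℝ) < n := by positivity
  have hlower := le_betaC_three_sub_torusGreen0 hn2 fun _ => 0
  have hupper := betaC_three_sub_torusGreen0_le hn2 fun _ => 0
  have hremainder : 11 * Real.pi ^ 2 / 16 / n ^ 2 ≤ c / n := by
    rw [div_le_div_iff₀ (by positivity) hn0]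
    nlinarith [(div_le_iff₀ hc).mp (Nat.ceil_le.mp hceil)]
  have hhalves : diagonalGapConst / n = c / n + c / n := by rw [← add_div, add_halves]
  rw [neg_div, neg_div]
  constructor <;> linarith

end
end

section
/- Let d = 3. There exist a real constant c_* with c_* < 3^{2/3}/(2·(4π)^{2/3}) and n_0 ∈ ℕ such that for all n ≥ n_0 and every y ∈ ℤ³ satisfying max_i |y_i| = ⌊n/2⌋ and |y_i| ≤ ⌊n/2⌋ for all i (i.e. y lies on the boundary of the cube [−⌊n/2⌋, ⌊n/2⌋]³), one has n·G_n^0(0, ȳ) ≤ c_*. -/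
open MeasureTheory ProbabilityTheory Filter Topology Matrix
open scoped Classical ENNReal

noncomputable section

/-! Slice the torus Green's function along an axis on which the two points are antipodal, i.e. on
which they differ by `±⌊n/2⌋`. Every frequency `v` in the other directions contributes the massive
Green's function of a cycle with squared mass `eta v`, and a second-order recurrence computes it
exactly: it is a parabola for `v = 0` and a multiple of `cosh ((n - 2 y) r) / sinh (n r)`, where
`eta v = 4 sinh² r`, for `v ≠ 0`. At the antipode the parabola is nonpositive and the other slices
are of order `exp (-n r)`. In dimension three, the low frequencies sum to at most a geometric series
in the cyclic norms of the coordinates of `v`, worth `8/45 · 24/25 < 0.18`, and the high ones are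
exponentially small. Finally `0.18 < (3 / (4π)) ^ (2/3) / 2` because `0.6 ^ 3 < 3 / (4π)`. -/

section

open Real

lemma sum_range_eq_zero_of_antisymm {n : ℕ} {f : ℕ → ℝ} (h0 : f 0 = 0)
    (hf : ∀ w ≤ n, f (n - w) = -f w) : ∑ w ∈ Finset.range n, f w = 0 := by
  have hsucc : ∑ w ∈ Finset.range (n + 1), f w = ∑ w ∈ Finset.range n, f w := by
    have hn : f n = 0 := by simpa [h0] using hf 0 n.zero_le
    rw [Finset.sum_range_succ, hn, add_zero]
  have hreflect := Finset.sum_range_reflect f (n + 1)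
  simp only [Nat.add_sub_cancel] at hreflect
  rw [Finset.sum_congr rfl fun w hw => hf w (Finset.mem_range_succ_iff.1 hw),
    Finset.sum_neg_distrib, hsucc] at hreflect
  linarith

lemma eq_of_second_order_recurrence {n : ℕ} {f g : ℕ → ℝ} {c e : ℝ}
    (h0 : f 0 = g 0) (h1 : f 1 = g 1)
    (hf : ∀ j, j + 2 ≤ n → f (j + 2) = c * f (j + 1) - f j + e)
    (hg : ∀ j, j + 2 ≤ n → g (j + 2) = c * g (j + 1) - g j + e) {j : ℕ} (hj : j ≤ n) :
    f j = g j := by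
  induction j using Nat.twoStepInduction with
  | zero => exact h0
  | one => exact h1
  | more j ih ih' => rw [hf j hj, hg j hj, ih (by lia), ih' (by lia)]

lemma sum_range_mul_sub (x : ℝ) (m : ℕ) :
    ∑ j ∈ Finset.range m, (j : ℝ) * (x - j) = m * (m - 1) * (3 * x - 2 * m + 1) / 6 := by
  induction m with
  | zero => simp
  | succ m ih => rw [Finset.sum_range_succ, ih]; push_cast; ring

lemma sum_range_cos_eq_zero {n y : ℕ} (hy : ¬ n ∣ y) :
    ∑ w ∈ Finset.range n, cos (2 * π * (w * (y : ℝ)) / n) = 0 := by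
  rcases eq_or_ne n 0 with rfl | hn
  · simp
  have hζ := Complex.isPrimitiveRoot_exp n hn
  set ζ := Complex.exp (2 * π * Complex.I / n) with hζ_def
  have hne : ζ ^ y ≠ 1 := fun h => hy (hζ.dvd_of_pow_eq_one y h)
  have hsum : ∑ w ∈ Finset.range n, (ζ ^ y) ^ w = 0 := by
    rw [geom_sum_eq hne, pow_right_comm, hζ.pow_eq_one, one_pow, sub_self, zero_div]
  rw [← Complex.zero_re, ← hsum, Complex.re_sum]
  refine Finset.sum_congr rfl fun w _ => ?_
  rw [hζ_def, ← Complex.exp_nat_mul, ← Complex.exp_nat_mul, ← Complex.exp_ofReal_mul_I_re]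
  congr 2
  push_cast
  ring

/-! ### The massive Green's function of a cycle -/

/-- The eigenvalue at frequency `w` of the discrete Laplacian on the cycle `ℤ/nℤ`. -/
def cycleEigenvalue (n w : ℕ) : ℝ := 2 * (1 - cos (2 * π * w / n))

/-- `n` times the Green's function of the cycle `ℤ/nℤ` with squared mass `a`, evaluated at
distance `y`. For `a = 0` the `w = 0` term is `1 / 0 = 0`, so that `cycleGreen n 0` is the
zero-average Green's function. The position is real so that shifts need no casts. -/
def cycleGreen (n : ℕ) (a y : ℝ) : ℝ :=
  ∑ w ∈ Finset.range n, cos (2 * π * (w * y) / n) / (a + cycleEigenvalue n w)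

lemma cycleEigenvalue_eq_four_mul_sin_sq (n w : ℕ) :
    cycleEigenvalue n w = 4 * sin (π * w / n) ^ 2 := by
  rw [cycleEigenvalue, sin_sq_eq_half_sub, show 2 * (π * w / n) = 2 * π * w / n by ring]
  ring

lemma cycleEigenvalue_nonneg (n w : ℕ) : 0 ≤ cycleEigenvalue n w := by
  rw [cycleEigenvalue_eq_four_mul_sin_sq]
  positivity

lemma cycleEigenvalue_zero (n : ℕ) : cycleEigenvalue n 0 = 0 := by
  simp [cycleEigenvalue]

lemma cycleEigenvalue_pos {n w : ℕ} (hw : 0 < w) (hwn : w < n) : 0 < cycleEigenvalue n w := by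
  have hn : 0 < n := hw.trans hwn
  have hsin : 0 < sin (π * w / n) := by
    refine sin_pos_of_pos_of_lt_pi (by positivity) ?_
    rw [div_lt_iff₀ (by positivity)]
    gcongr
  rw [cycleEigenvalue_eq_four_mul_sin_sq]
  positivity

section Cycle

variable {n : ℕ}

lemma cycleGreen_neg (a y : ℝ) : cycleGreen n a (-y) = cycleGreen n a y := by
  simp only [cycleGreen, mul_neg, neg_div, cos_neg]

lemma cycleGreen_recurrence (a y : ℝ) :
    (2 + a) * cycleGreen n a y - cycleGreen n a (y + 1) - cycleGreen n a (y - 1) =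
      ∑ w ∈ Finset.range n, cos (2 * π * (w * y) / n) *
        ((a + cycleEigenvalue n w) / (a + cycleEigenvalue n w)) := by
  simp only [cycleGreen, Finset.mul_sum, ← Finset.sum_sub_distrib]
  refine Finset.sum_congr rfl fun w _ => ?_
  rw [show 2 * π * (w * (y + 1)) / n = 2 * π * (w * y) / n + 2 * π * w / n by ring,
    show 2 * π * (w * (y - 1)) / n = 2 * π * (w * y) / n - 2 * π * w / n by ring,
    cos_add, cos_sub, cycleEigenvalue]
  ring

lemma cycleGreen_recurrence_of_pos {a : ℝ} (ha : 0 < a) (y : ℝ) :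
    (2 + a) * cycleGreen n a y - cycleGreen n a (y + 1) - cycleGreen n a (y - 1) =
      ∑ w ∈ Finset.range n, cos (2 * π * (w * y) / n) := by
  rw [cycleGreen_recurrence]
  refine Finset.sum_congr rfl fun w _ => ?_
  rw [div_self (add_pos_of_pos_of_nonneg ha (cycleEigenvalue_nonneg n w)).ne', mul_one]

lemma cycleGreen_add_two_of_pos {a : ℝ} (ha : 0 < a) {j : ℕ} (hj : j + 2 ≤ n) :
    cycleGreen n a (j + 2 : ℕ) =
      (2 + a) * cycleGreen n a (j + 1 : ℕ) - cycleGreen n a j := by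
  have hrec := cycleGreen_recurrence_of_pos (n := n) ha (j + 1 : ℕ)
  rw [sum_range_cos_eq_zero (Nat.not_dvd_of_pos_of_lt j.succ_pos (by lia)),
    show ((j + 1 : ℕ) : ℝ) + 1 = (j + 2 : ℕ) by push_cast; ring,
    show ((j + 1 : ℕ) : ℝ) - 1 = j by push_cast; ring] at hrec
  linarith

lemma cycleGreen_one_of_pos {a : ℝ} (ha : 0 < a) :
    cycleGreen n a 1 = ((2 + a) * cycleGreen n a 0 - n) / 2 := by
  have hrec := cycleGreen_recurrence_of_pos (n := n) ha 0
  simp only [zero_add, zero_sub, cycleGreen_neg, mul_zero, zero_div, cos_zero,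
    Finset.sum_const, Finset.card_range, nsmul_eq_mul, mul_one] at hrec
  linarith

lemma cycleGreen_four_mul_sinh_sq_eq_of_zero {u : ℝ} (hu : 0 < u) {j : ℕ} (hj : j ≤ n) :
    cycleGreen n (4 * sinh u ^ 2) j =
      cosh (j * (2 * u)) * cycleGreen n (4 * sinh u ^ 2) 0 -
        n * sinh (j * (2 * u)) / (2 * sinh (2 * u)) := by
  have hs2 : sinh (2 * u) ≠ 0 := (sinh_pos_iff.2 (by positivity)).ne'
  have ha : 0 < 4 * sinh u ^ 2 := by positivity [sinh_pos_iff.2 hu]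
  have hcosh : 2 + 4 * sinh u ^ 2 = 2 * cosh (2 * u) := by rw [cosh_two_mul, cosh_sq]; ring
  refine eq_of_second_order_recurrence (c := 2 + 4 * sinh u ^ 2) (e := 0)
    (f := fun j : ℕ => cycleGreen n (4 * sinh u ^ 2) j)
    (g := fun j : ℕ => cosh (j * (2 * u)) * cycleGreen n (4 * sinh u ^ 2) 0 -
        n * sinh (j * (2 * u)) / (2 * sinh (2 * u)))
    (by simp) ?_ (fun j hj => by rw [add_zero]; exact cycleGreen_add_two_of_pos ha hj)
    (fun j _ => ?_) hj
  · simp only [Nat.cast_one, one_mul]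
    rw [cycleGreen_one_of_pos ha, hcosh]
    field_simp
  · have hprev : (j : ℝ) * (2 * u) = (j + 1 : ℕ) * (2 * u) - 2 * u := by push_cast; ring
    have hnext : ((j + 2 : ℕ) : ℝ) * (2 * u) = (j + 1 : ℕ) * (2 * u) + 2 * u := by
      push_cast; ring
    simp only [hprev, hnext, hcosh, cosh_add, cosh_sub, sinh_add, sinh_sub]
    ring

lemma sum_range_cycleGreen_zero : ∑ j ∈ Finset.range n, cycleGreen n 0 j = 0 := by
  simp only [cycleGreen]
  rw [Finset.sum_comm]
  refine Finset.sum_eq_zero fun w hw => ?_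
  rcases w.eq_zero_or_pos with rfl | hpos
  · simp [cycleEigenvalue_zero]
  · rw [← Finset.sum_div, Finset.sum_congr rfl fun j _ => by rw [mul_comm (w : ℝ)],
      sum_range_cos_eq_zero (Nat.not_dvd_of_pos_of_lt hpos (Finset.mem_range.1 hw)), zero_div]

lemma abs_sub_two_mul_half_le_one : |(n : ℝ) - 2 * (n / 2 : ℕ)| ≤ 1 := by
  have hmod : (n : ℝ) - 2 * (n / 2 : ℕ) = (n % 2 : ℕ) := by
    rw [sub_eq_iff_eq_add']
    exact_mod_cast (Nat.div_add_mod n 2).symm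
  rw [hmod, Nat.abs_cast]
  exact_mod_cast Nat.lt_succ_iff.1 (n.mod_lt two_pos)

variable [NeZero n]

lemma cycleEigenvalue_reflect {w : ℕ} (hw : w ≤ n) :
    cycleEigenvalue n (n - w) = cycleEigenvalue n w := by
  have hn : (n : ℝ) ≠ 0 := NeZero.ne _
  have harg : 2 * π * ((n - w : ℕ) : ℝ) / n = 2 * π - 2 * π * w / n := by
    rw [Nat.cast_sub hw]
    field_simp
  rw [cycleEigenvalue, cycleEigenvalue, harg, cos_two_pi_sub]

lemma sum_range_sin_div_eq_zero (a : ℝ) (y : ℕ) :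
    ∑ w ∈ Finset.range n, sin (2 * π * (w * (y : ℝ)) / n) / (a + cycleEigenvalue n w) = 0 := by
  have hn : (n : ℝ) ≠ 0 := NeZero.ne _
  refine sum_range_eq_zero_of_antisymm (by simp) fun w hw => ?_
  have harg : 2 * π * (((n - w : ℕ) : ℝ) * y) / n = y * (2 * π) - 2 * π * (w * y) / n := by
    rw [Nat.cast_sub hw]
    field_simp
  rw [harg, sin_nat_mul_two_pi_sub, cycleEigenvalue_reflect hw, neg_div]

lemma cycleGreen_reflect (a y : ℝ) : cycleGreen n a (n - y) = cycleGreen n a y := by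
  have hn : (n : ℝ) ≠ 0 := NeZero.ne _
  refine Finset.sum_congr rfl fun w _ => ?_
  have harg : 2 * π * (w * ((n : ℝ) - y)) / n = w * (2 * π) - 2 * π * (w * y) / n := by
    field_simp
  rw [harg, cos_nat_mul_two_pi_sub]

lemma cycleGreen_zero_recurrence (y : ℝ) :
    2 * cycleGreen n 0 y - cycleGreen n 0 (y + 1) - cycleGreen n 0 (y - 1) =
      ∑ w ∈ Finset.range n, cos (2 * π * (w * y) / n) - 1 := by
  obtain ⟨k, rfl⟩ := Nat.exists_eq_succ_of_ne_zero (NeZero.ne n)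
  have hrec := cycleGreen_recurrence (n := k + 1) 0 y
  have hself : ∀ w ∈ Finset.range k,
      cycleEigenvalue (k + 1) (w + 1) / cycleEigenvalue (k + 1) (w + 1) = 1 := fun w hw =>
    div_self (cycleEigenvalue_pos w.succ_pos
      (Nat.succ_lt_succ (Finset.mem_range.1 hw))).ne'
  simp only [zero_add, add_zero] at hrec
  rw [Nat.succ_eq_add_one, hrec, Finset.sum_range_succ', Finset.sum_range_succ',
    Finset.sum_congr rfl fun w hw => by rw [hself w hw, mul_one]]
  simp [cycleEigenvalue_zero]

lemma cycleGreen_zero_add_two {j : ℕ} (hj : j + 2 ≤ n) :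
    cycleGreen n 0 (j + 2 : ℕ) =
      2 * cycleGreen n 0 (j + 1 : ℕ) - cycleGreen n 0 j + 1 := by
  have hrec := cycleGreen_zero_recurrence (n := n) (j + 1 : ℕ)
  rw [sum_range_cos_eq_zero (Nat.not_dvd_of_pos_of_lt j.succ_pos (by lia)),
    show ((j + 1 : ℕ) : ℝ) + 1 = (j + 2 : ℕ) by push_cast; ring,
    show ((j + 1 : ℕ) : ℝ) - 1 = j by push_cast; ring] at hrec
  linarith

lemma cycleGreen_zero_one : cycleGreen n 0 1 = cycleGreen n 0 0 - (n - 1) / 2 := by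
  have hrec := cycleGreen_zero_recurrence (n := n) 0
  simp only [zero_add, zero_sub, cycleGreen_neg, mul_zero, zero_div, cos_zero,
    Finset.sum_const, Finset.card_range, nsmul_eq_mul, mul_one] at hrec
  linarith

theorem cycleGreen_four_mul_sinh_sq {u : ℝ} (hu : 0 < u) {j : ℕ} (hj : j ≤ n) :
    cycleGreen n (4 * sinh u ^ 2) j =
      n * cosh ((n - 2 * j) * u) / (2 * sinh (2 * u) * sinh (n * u)) := by
  have hn : (0 : ℝ) < n := Nat.cast_pos.2 (NeZero.pos n)
  have hs2 : 0 < sinh (2 * u) := sinh_pos_iff.2 (by positivity)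
  have hsn : 0 < sinh (n * u) := sinh_pos_iff.2 (by positivity)
  have hperiodic : cycleGreen n (4 * sinh u ^ 2) n = cycleGreen n (4 * sinh u ^ 2) 0 := by
    simpa using cycleGreen_reflect (n := n) (4 * sinh u ^ 2) 0
  have hzero : cycleGreen n (4 * sinh u ^ 2) 0 =
      n * cosh (n * u) / (2 * sinh (2 * u) * sinh (n * u)) := by
    have hend := cycleGreen_four_mul_sinh_sq_eq_of_zero hu le_rfl (n := n)
    rw [hperiodic, mul_left_comm, cosh_two_mul, sinh_two_mul, cosh_sq (n * u)] at hend
    field_simp [hs2.ne'] at hend ⊢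
    refine mul_left_cancel₀ hsn.ne' ?_
    linear_combination -hend
  rw [cycleGreen_four_mul_sinh_sq_eq_of_zero hu hj, hzero,
    show ((n : ℝ) - 2 * j) * u = n * u - j * (2 * u) by ring, cosh_sub]
  field_simp

theorem cycleGreen_zero {j : ℕ} (hj : j ≤ n) :
    cycleGreen n 0 j = ((n : ℝ) ^ 2 - 1) / 12 - j * (n - j) / 2 := by
  have hn : (n : ℝ) ≠ 0 := NeZero.ne _
  have hparabola : ∀ j ≤ n, cycleGreen n 0 j = cycleGreen n 0 0 - j * (n - j) / 2 := by
    intro j hj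
    refine eq_of_second_order_recurrence (c := 2) (e := 1)
      (f := fun j : ℕ => cycleGreen n 0 j)
      (g := fun j : ℕ => cycleGreen n 0 0 - (j : ℝ) * (n - j) / 2)
      (by simp) ?_ (fun j hj => cycleGreen_zero_add_two hj) (fun j _ => ?_) hj
    · simp only [Nat.cast_one, one_mul, cycleGreen_zero_one]
    · push_cast
      ring
  have hmean := sum_range_cycleGreen_zero (n := n)
  rw [Finset.sum_congr rfl fun j hj => hparabola j (Finset.mem_range.1 hj).le,
    Finset.sum_sub_distrib, ← Finset.sum_div, sum_range_mul_sub, Finset.sum_const,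
    Finset.card_range, nsmul_eq_mul] at hmean
  have hzero : cycleGreen n 0 0 = ((n : ℝ) ^ 2 - 1) / 12 := by
    refine mul_left_cancel₀ hn ?_
    linear_combination hmean
  rw [hparabola j hj, hzero]

lemma cycleGreen_zero_half_nonpos : cycleGreen n 0 (n / 2 : ℕ) ≤ 0 := by
  rw [cycleGreen_zero (Nat.div_le_self n 2)]
  have hn : (1 : ℝ) ≤ n := Nat.one_le_cast.2 (NeZero.pos n)
  have hsq := (sq_le_one_iff_abs_le_one _).2 (abs_sub_two_mul_half_le_one (n := n))
  nlinarith

lemma abs_cycleGreen_half_le {u : ℝ} (hu : 0 < u) :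
    |cycleGreen n (4 * sinh u ^ 2) (n / 2 : ℕ)| ≤ n / (4 * sinh u * sinh (n * u)) := by
  have hn : (0 : ℝ) < n := Nat.cast_pos.2 (NeZero.pos n)
  have hs : 0 < sinh u := sinh_pos_iff.2 hu
  have hsn : 0 < sinh (n * u) := sinh_pos_iff.2 (by positivity)
  have hden : 0 < 2 * (2 * sinh u * cosh u) * sinh (n * u) := by positivity [hs, hsn, cosh_pos u]
  have hcosh : cosh ((n - 2 * (n / 2 : ℕ)) * u) ≤ cosh u := by
    rw [cosh_le_cosh, abs_mul]
    exact mul_le_of_le_one_left (abs_nonneg u) abs_sub_two_mul_half_le_one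
  rw [cycleGreen_four_mul_sinh_sq hu (Nat.div_le_self n 2), sinh_two_mul,
    abs_of_nonneg (by positivity [hden, cosh_pos ((n - 2 * (n / 2 : ℕ)) * u)])]
  calc n * cosh ((n - 2 * (n / 2 : ℕ)) * u) / (2 * (2 * sinh u * cosh u) * sinh (n * u))
      ≤ n * cosh u / (2 * (2 * sinh u * cosh u) * sinh (n * u)) := by gcongr
    _ = n / (4 * sinh u * sinh (n * u)) := by field_simp; norm_num

end Cycle

/-! ### Slicing the torus along one axis -/

lemma eta_eq_sum_cycleEigenvalue (d n : ℕ) (w : Fin d → Fin n) :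
    eta d n w = ∑ i, cycleEigenvalue n (w i) := by
  simp only [eta, cycleEigenvalue, Finset.mul_sum]

lemma eta_nonneg (d n : ℕ) (w : Fin d → Fin n) : 0 ≤ eta d n w := by
  rw [eta_eq_sum_cycleEigenvalue]
  exact Finset.sum_nonneg fun i _ => cycleEigenvalue_nonneg n (w i)

lemma eta_zero (d n : ℕ) [NeZero n] : eta d n 0 = 0 := by
  simp [eta]

lemma eta_insertNth {d n : ℕ} (i : Fin (d + 1)) (w : Fin n) (v : Fin d → Fin n) :
    eta (d + 1) n (i.insertNth w v) = eta d n v + cycleEigenvalue n w := by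
  simp only [eta_eq_sum_cycleEigenvalue, Fin.sum_univ_succAbove _ i, Fin.insertNth_apply_same,
    Fin.insertNth_apply_succAbove, add_comm]

section Torus

variable {d n : ℕ} [NeZero n]

lemma sum_fin_cos_add_div (a b : ℝ) (y : ℕ) :
    ∑ w : Fin n, cos (2 * π * ((w : ℕ) * (y : ℝ)) / n + b) / (a + cycleEigenvalue n w) =
      cos b * cycleGreen n a y := by
  have hterm : ∀ w : ℕ, cos (2 * π * (w * (y : ℝ)) / n + b) / (a + cycleEigenvalue n w) =
      cos b * (cos (2 * π * (w * (y : ℝ)) / n) / (a + cycleEigenvalue n w)) -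
        sin b * (sin (2 * π * (w * (y : ℝ)) / n) / (a + cycleEigenvalue n w)) := by
    intro w
    rw [cos_add]
    ring
  simp only [hterm]
  rw [Finset.sum_sub_distrib, ← Finset.mul_sum, ← Finset.mul_sum,
    Fin.sum_univ_eq_sum_range
      (fun w : ℕ => sin (2 * π * (w * (y : ℝ)) / n) / (a + cycleEigenvalue n w)),
    sum_range_sin_div_eq_zero, mul_zero, sub_zero, cycleGreen,
    ← Fin.sum_univ_eq_sum_range
      (fun w : ℕ => cos (2 * π * (w * (y : ℝ)) / n) / (a + cycleEigenvalue n w))]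

lemma sum_cos_div_eta_eq_sum_cycleGreen (i : Fin (d + 1)) (z : Fin (d + 1) → ℕ) :
    ∑ w : Fin (d + 1) → Fin n, cos (2 * π * (∑ k, ((w k : ℕ) : ℝ) * z k) / n) / eta (d + 1) n w =
      ∑ v : Fin d → Fin n, cos (2 * π * (∑ k, ((v k : ℕ) : ℝ) * z (i.succAbove k)) / n) *
        cycleGreen n (eta d n v) (z i) := by
  rw [← (Fin.insertNthEquiv (fun _ => Fin n) i).sum_comp, Fintype.sum_prod_type_right]
  refine Finset.sum_congr rfl fun v _ => ?_
  rw [← sum_fin_cos_add_div]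
  refine Finset.sum_congr rfl fun w _ => ?_
  have hinsert : Fin.insertNthEquiv (fun _ => Fin n) i (w, v) = i.insertNth w v := rfl
  rw [hinsert, eta_insertNth, Fin.sum_univ_succAbove _ i, mul_add, add_div]
  simp only [Fin.insertNth_apply_same, Fin.insertNth_apply_succAbove]

lemma torusGreen0_eq_sum_cycleGreen (i : Fin (d + 1)) (x y : Fin (d + 1) → ZMod n) :
    torusGreen0 (d + 1) n x y = (1 / (n : ℝ) ^ (d + 1)) * ∑ v : Fin d → Fin n,
      cos (2 * π * (∑ k, ((v k : ℕ) : ℝ) * (x (i.succAbove k) - y (i.succAbove k)).val) / n) *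
        cycleGreen n (eta d n v) (x i - y i).val := by
  rw [torusGreen0, Finset.sum_filter_of_ne, sum_cos_div_eta_eq_sum_cycleGreen i
    (fun k => (x k - y k).val)]
  intro w _ hw
  contrapose! hw
  have heta : eta (d + 1) n w = 0 := by simp [eta, hw]
  rw [heta, div_zero]

lemma cycleGreen_val_eq_half {z : ZMod n} (hz : z = (n / 2 : ℕ) ∨ z = -(n / 2 : ℕ)) (a : ℝ) :
    cycleGreen n a z.val = cycleGreen n a (n / 2 : ℕ) := by
  have hlt : n / 2 < n := Nat.div_lt_self (NeZero.pos n) one_lt_two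
  rcases hz with rfl | rfl
  · rw [ZMod.val_natCast_of_lt hlt]
  · by_cases hzero : ((n / 2 : ℕ) : ZMod n) = 0
    · rw [hzero, neg_zero, ← hzero, ZMod.val_natCast_of_lt hlt]
    · rw [ZMod.neg_val, if_neg hzero, ZMod.val_natCast_of_lt hlt, Nat.cast_sub hlt.le,
        cycleGreen_reflect]

lemma torusGreen0_le_sum_abs_cycleGreen {i : Fin (d + 1)} {x y : Fin (d + 1) → ZMod n}
    (h : x i - y i = (n / 2 : ℕ) ∨ x i - y i = -(n / 2 : ℕ)) :
    torusGreen0 (d + 1) n x y ≤ (1 / (n : ℝ) ^ (d + 1)) *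
      ∑ v ∈ Finset.univ.erase (0 : Fin d → Fin n), |cycleGreen n (eta d n v) (n / 2 : ℕ)| := by
  rw [torusGreen0_eq_sum_cycleGreen i, ← Finset.add_sum_erase _ _ (Finset.mem_univ 0)]
  simp only [cycleGreen_val_eq_half h]
  gcongr
  refine (add_le_add ?_ (Finset.sum_le_sum fun v _ => ?_)).trans (zero_add _).le
  · simpa [eta_zero] using cycleGreen_zero_half_nonpos (n := n)
  · calc _ ≤ |cos _ * cycleGreen n (eta d n v) (n / 2 : ℕ)| := le_abs_self _
      _ = |cos _| * |cycleGreen n (eta d n v) (n / 2 : ℕ)| := abs_mul _ _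
      _ ≤ |cycleGreen n (eta d n v) (n / 2 : ℕ)| :=
        mul_le_of_le_one_left (abs_nonneg _) (abs_cos_le_one _)

end Torus

/-! ### Decay of the massive slices -/

/-- The exponential rate at which the slice with transverse frequency `v` decays along the axis:
the massive Green's function of squared mass `eta d n v = 4 sinh² r` is a multiple of
`cosh ((n - 2 y) r)` at distance `y`. -/
def decayRate (d n : ℕ) (v : Fin d → Fin n) : ℝ := arsinh (√(eta d n v) / 2)

/-- The distance from `w` to `0` in the cycle `ℤ/nℤ`, for `w ≤ n`. -/
def cycleNorm (n w : ℕ) : ℕ := min w (n - w)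

lemma cycleNorm_pos {n w : ℕ} (hw : 0 < w) (hwn : w < n) : 0 < cycleNorm n w :=
  lt_min hw (Nat.sub_pos_of_lt hwn)

lemma min_half_three_mul_le_sin_pi_mul {x : ℝ} (h0 : 0 ≤ x) (h1 : x ≤ 1 / 2) :
    min (1 / 2) (3 * x) ≤ sin (π * x) := by
  have hπ := pi_pos
  rcases le_total x (1 / 6) with hx | hx
  · have hconcave := strictConcaveOn_sin_Icc.concaveOn.2 (⟨le_rfl, hπ.le⟩ : (0 : ℝ) ∈ Set.Icc 0 π)
      (⟨by positivity, by linarith⟩ : π / 6 ∈ Set.Icc 0 π)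
      (by linarith : 0 ≤ 1 - 6 * x) (by positivity : 0 ≤ 6 * x) (sub_add_cancel _ _)
    simp only [smul_eq_mul, sin_zero, sin_pi_div_six, mul_zero, zero_add] at hconcave
    calc min (1 / 2) (3 * x) ≤ 6 * x * (1 / 2) := (min_le_right _ _).trans_eq (by ring)
      _ ≤ sin (6 * x * (π / 6)) := hconcave
      _ = sin (π * x) := by ring_nf
  · calc min (1 / 2) (3 * x) ≤ sin (π / 6) := by rw [sin_pi_div_six]; exact min_le_left _ _
      _ ≤ sin (π * x) := sin_le_sin_of_le_of_le_pi_div_two (by linarith) (by nlinarith)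
        (by nlinarith)

lemma min_half_le_sin_pi_mul_div {n w : ℕ} (hw : w < n) :
    min (1 / 2) (3 * (cycleNorm n w : ℝ) / n) ≤ sin (π * w / n) := by
  have hn : (0 : ℝ) < n := Nat.cast_pos.2 (by lia)
  have hsin : sin (π * (cycleNorm n w / n)) = sin (π * w / n) := by
    rcases le_total w (n - w) with h | h
    · rw [cycleNorm, min_eq_left h, mul_div_assoc]
    · rw [cycleNorm, min_eq_right h, Nat.cast_sub hw.le, ← sin_pi_sub (π * w / n)]
      congr 1
      field_simp
  rw [← hsin, mul_div_assoc]
  refine min_half_three_mul_le_sin_pi_mul (by positivity) ?_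
  rw [div_le_div_iff₀ hn two_pos]
  exact_mod_cast (by rw [cycleNorm]; lia : cycleNorm n w * 2 ≤ 1 * n)

lemma one_add_sinh_le_exp (u : ℝ) : 1 + sinh u ≤ exp u := by
  rw [← cosh_add_sinh]
  gcongr
  exact one_le_cosh u

section DecayRate

variable {d n : ℕ}

lemma sinh_decayRate (v : Fin d → Fin n) : sinh (decayRate d n v) = √(eta d n v) / 2 :=
  sinh_arsinh _

lemma decayRate_nonneg (v : Fin d → Fin n) : 0 ≤ decayRate d n v :=
  arsinh_nonneg_iff.2 (by positivity)

lemma four_mul_sinh_decayRate_sq (v : Fin d → Fin n) :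
    4 * sinh (decayRate d n v) ^ 2 = eta d n v := by
  rw [sinh_decayRate, div_pow, sq_sqrt (eta_nonneg d n v)]
  ring

lemma sinh_decayRate_sq (v : Fin d → Fin n) :
    sinh (decayRate d n v) ^ 2 = ∑ j, sin (π * (v j : ℕ) / n) ^ 2 := by
  have h := four_mul_sinh_decayRate_sq v
  simp only [eta_eq_sum_cycleEigenvalue, cycleEigenvalue_eq_four_mul_sin_sq,
    ← Finset.mul_sum] at h
  linarith

lemma sin_le_sinh_decayRate (v : Fin d → Fin n) (j : Fin d) :
    sin (π * (v j : ℕ) / n) ≤ sinh (decayRate d n v) := by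
  refine le_of_sq_le_sq ?_ (sinh_nonneg_iff.2 (decayRate_nonneg v))
  rw [sinh_decayRate_sq]
  exact Finset.single_le_sum (f := fun j => sin (π * (v j : ℕ) / n) ^ 2)
    (fun j _ => sq_nonneg _) (Finset.mem_univ j)

lemma three_le_mul_sinh_decayRate [NeZero n] (hn : 6 ≤ n) {v : Fin d → Fin n} (hv : v ≠ 0) :
    3 ≤ n * sinh (decayRate d n v) := by
  obtain ⟨j, hj⟩ := Function.ne_iff.1 hv
  have hn6 : (6 : ℝ) ≤ n := by exact_mod_cast hn
  have hnorm : (1 : ℝ) ≤ cycleNorm n (v j) := by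
    exact_mod_cast cycleNorm_pos (Fin.pos_iff_ne_zero.2 hj) (v j).isLt
  rw [← div_le_iff₀' (by positivity)]
  calc 3 / (n : ℝ) ≤ min (1 / 2) (3 * (cycleNorm n (v j) : ℝ) / n) := by
        refine le_min ?_ (by gcongr; linarith)
        rw [div_le_div_iff₀ (by positivity) two_pos]
        linarith
    _ ≤ sin (π * (v j : ℕ) / n) := min_half_le_sin_pi_mul_div (v j).isLt
    _ ≤ sinh (decayRate d n v) := sin_le_sinh_decayRate v j

lemma nine_mul_sq_sum_cycleNorm_le {v : Fin d → Fin n} (h : sinh (decayRate d n v) < 1 / 2) :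
    9 * (∑ j, (cycleNorm n (v j) : ℝ)) ^ 2 ≤ d * (n * sinh (decayRate d n v)) ^ 2 := by
  have hcoord : ∀ j, (3 * cycleNorm n (v j) : ℝ) ≤ n * sin (π * (v j : ℕ) / n) := by
    intro j
    have hn : (0 : ℝ) < n := Nat.cast_pos.2 (v j).pos
    rw [← div_le_iff₀' hn]
    exact (min_le_iff.1 (min_half_le_sin_pi_mul_div (v j).isLt)).resolve_left
      ((sin_le_sinh_decayRate v j).trans_lt h).not_ge
  calc 9 * (∑ j, (cycleNorm n (v j) : ℝ)) ^ 2 = (∑ j, (3 * cycleNorm n (v j) : ℝ)) ^ 2 := by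
        rw [← Finset.mul_sum]
        ring
    _ ≤ d * ∑ j, (3 * cycleNorm n (v j) : ℝ) ^ 2 := by
        simpa using sq_sum_le_card_mul_sum_sq (s := Finset.univ)
          (f := fun j => (3 * cycleNorm n (v j) : ℝ))
    _ ≤ d * ∑ j, (n * sin (π * (v j : ℕ) / n)) ^ 2 := by
        refine mul_le_mul_of_nonneg_left (Finset.sum_le_sum fun j _ => ?_) d.cast_nonneg
        exact pow_le_pow_left₀ (by positivity) (hcoord j) 2
    _ = d * (n * sinh (decayRate d n v)) ^ 2 := by
        simp only [mul_pow, ← Finset.mul_sum, sinh_decayRate_sq]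

lemma abs_cycleGreen_eta_half_div_sq_le [NeZero n] (hn : 6 ≤ n) {v : Fin d → Fin n} (hv : v ≠ 0) :
    |cycleGreen n (eta d n v) (n / 2 : ℕ)| / (n : ℝ) ^ 2 ≤
      8 / 45 * exp (-(n * decayRate d n v)) := by
  have hn0 : (0 : ℝ) < n := Nat.cast_pos.2 (NeZero.pos n)
  have h3 := three_le_mul_sinh_decayRate hn hv
  set u := decayRate d n v with hu_def
  have hs : 0 < sinh u := pos_of_mul_pos_right (by linarith) hn0.le
  have hexp : 4 ≤ exp (n * u) :=
    calc (4 : ℝ) ≤ 1 + n * sinh u := by linarith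
      _ ≤ (1 + sinh u) ^ n := one_add_mul_le_pow (by linarith) n
      _ ≤ exp u ^ n := by gcongr; exact one_add_sinh_le_exp u
      _ = exp (n * u) := (exp_nat_mul u n).symm
  have hsinh : 15 / 32 * exp (n * u) ≤ sinh (n * u) := by
    have hinv : exp (-(n * u)) ≤ 1 / 4 := by
      rw [exp_neg, one_div]
      exact inv_anti₀ four_pos hexp
    rw [sinh_eq]
    linarith
  rw [← four_mul_sinh_decayRate_sq, ← hu_def]
  calc |cycleGreen n (4 * sinh u ^ 2) (n / 2 : ℕ)| / (n : ℝ) ^ 2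
      ≤ n / (4 * sinh u * sinh (n * u)) / (n : ℝ) ^ 2 := by
        gcongr
        exact abs_cycleGreen_half_le (sinh_pos_iff.1 hs)
    _ = 1 / (4 * (n * sinh u) * sinh (n * u)) := by field_simp
    _ ≤ 1 / (4 * 3 * (15 / 32 * exp (n * u))) := by gcongr
    _ = 8 / 45 * exp (-(n * u)) := by
        rw [exp_neg]
        field_simp
        norm_num

end DecayRate

/-! ### Numerical bounds in dimension three -/

lemma exp_neg_nine_fifths_le : exp (-(9 / 5)) ≤ 1 / 6 := by
  have hpow : (6 : ℝ) ^ 5 ≤ exp (9 / 5) ^ 5 :=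
    calc (6 : ℝ) ^ 5 ≤ 2.71 ^ 9 := by norm_num
      _ ≤ exp 1 ^ 9 := by gcongr; linarith [exp_one_gt_d9]
      _ = exp (9 / 5) ^ 5 := by rw [← exp_nat_mul, ← exp_nat_mul]; norm_num
  rw [exp_neg, one_div]
  exact inv_anti₀ (by norm_num) (le_of_pow_le_pow_left₀ (by norm_num) (exp_pos _).le hpow)

lemma six_sevenths_mul_sinh_le {u : ℝ} (hu : 0 ≤ u) (h : sinh u ≤ 1 / 6) :
    6 / 7 * sinh u ≤ u := by
  have hs : 0 ≤ sinh u := sinh_nonneg_iff.2 hu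
  calc 6 / 7 * sinh u ≤ sinh u / (1 + sinh u) := by
        rw [le_div_iff₀ (by positivity)]
        nlinarith
    _ = 1 - (1 + sinh u)⁻¹ := by field_simp; ring
    _ ≤ log (1 + sinh u) := one_sub_inv_le_log_of_pos (by positivity)
    _ ≤ log (exp u) := log_le_log (by positivity) (one_add_sinh_le_exp u)
    _ = u := log_exp u

-- By Cauchy-Schwarz `n * sinh r ≥ 3 / √2 * m ≥ 21 / 10 * m`, where `m` is the sum of the cyclic
-- norms, and replacing `sinh r` by `r` costs a factor `6 / 7`, which leaves the rate `9 / 5`.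
lemma exp_neg_mul_decayRate_le_of_low {n : ℕ} {v : Fin 2 → Fin n}
    (h : sinh (decayRate 2 n v) ≤ 1 / 6) :
    exp (-(n * decayRate 2 n v)) ≤ ∏ j, (1 / 6 : ℝ) ^ cycleNorm n (v j) := by
  have hnine := nine_mul_sq_sum_cycleNorm_le (h.trans_lt (by norm_num))
  have hu := decayRate_nonneg v
  have hs := six_sevenths_mul_sinh_le hu h
  set u := decayRate 2 n v
  set m := ∑ j, cycleNorm n (v j) with hm
  have hns : 21 / 10 * (m : ℝ) ≤ n * sinh u := by
    refine le_of_sq_le_sq ?_ (mul_nonneg n.cast_nonneg (sinh_nonneg_iff.2 hu))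
    rw [hm]
    push_cast at hnine ⊢
    nlinarith [sq_nonneg (∑ j, (cycleNorm n (v j) : ℝ))]
  have hnu : 9 / 5 * (m : ℝ) ≤ n * u :=
    calc 9 / 5 * (m : ℝ) ≤ n * (6 / 7 * sinh u) := by linarith
      _ ≤ n * u := by gcongr
  calc exp (-(n * u)) ≤ exp (m * -(9 / 5)) := exp_le_exp.2 (by linarith)
    _ = exp (-(9 / 5)) ^ m := exp_nat_mul _ m
    _ ≤ (1 / 6) ^ m := by gcongr; exact exp_neg_nine_fifths_le
    _ = ∏ j, (1 / 6 : ℝ) ^ cycleNorm n (v j) := (Finset.prod_pow_eq_pow_sum _ _ _).symm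

lemma exp_neg_mul_le_of_one_sixth_le_sinh {u : ℝ} (h : 1 / 6 ≤ sinh u) (n : ℕ) :
    exp (-(n * u)) ≤ (6 / 7) ^ n := by
  have hu : exp (-u) ≤ 6 / 7 := by
    rw [exp_neg, show (6 / 7 : ℝ) = (7 / 6)⁻¹ by norm_num]
    exact inv_anti₀ (by norm_num) (by linarith [one_add_sinh_le_exp u])
  calc exp (-(n * u)) = exp (-u) ^ n := by rw [← exp_nat_mul, mul_neg]
    _ ≤ (6 / 7) ^ n := by gcongr

lemma exp_neg_mul_decayRate_le {n : ℕ} (v : Fin 2 → Fin n) :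
    exp (-(n * decayRate 2 n v)) ≤ ∏ j, (1 / 6 : ℝ) ^ cycleNorm n (v j) + (6 / 7) ^ n := by
  rcases le_total (sinh (decayRate 2 n v)) (1 / 6) with h | h
  · exact (exp_neg_mul_decayRate_le_of_low h).trans (le_add_of_nonneg_right (by positivity))
  · exact (exp_neg_mul_le_of_one_sixth_le_sinh h n).trans
      (le_add_of_nonneg_left (by positivity))

lemma sum_fin_pow_cycleNorm_le {q : ℝ} (hq0 : 0 ≤ q) (hq1 : q < 1) (n : ℕ) :
    ∑ w : Fin n, q ^ cycleNorm n w ≤ (1 + q) / (1 - q) := by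
  have hq : 0 < 1 - q := by linarith
  rw [Fin.sum_univ_eq_sum_range (fun w : ℕ => q ^ cycleNorm n w)]
  rcases n with _ | k
  · rw [Finset.sum_range_zero]
    positivity
  have hgeom : ∑ j ∈ Finset.range k, q ^ j ≤ (1 - q)⁻¹ := by
    rw [← tsum_geometric_of_lt_one hq0 hq1]
    exact (summable_geometric_of_lt_one hq0 hq1).sum_le_tsum _ fun j _ => by positivity
  have hterm : ∀ j ∈ Finset.range k,
      q ^ cycleNorm (k + 1) (j + 1) ≤ q * q ^ j + q * q ^ (k - 1 - j) := by
    intro j hj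
    have hreflect : k + 1 - (j + 1) = k - 1 - j + 1 := by have := Finset.mem_range.1 hj; lia
    rw [← pow_succ', ← pow_succ', cycleNorm, hreflect]
    rcases min_choice (j + 1) (k - 1 - j + 1) with h | h <;> rw [h]
    · exact le_add_of_nonneg_right (by positivity)
    · exact le_add_of_nonneg_left (by positivity)
  calc ∑ w ∈ Finset.range (k + 1), q ^ cycleNorm (k + 1) w
      = ∑ j ∈ Finset.range k, q ^ cycleNorm (k + 1) (j + 1) + 1 := by
        simp [Finset.sum_range_succ', cycleNorm]
    _ ≤ ∑ j ∈ Finset.range k, (q * q ^ j + q * q ^ (k - 1 - j)) + 1 := by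
        gcongr with j hj
        exact hterm j hj
    _ = 2 * q * ∑ j ∈ Finset.range k, q ^ j + 1 := by
        rw [Finset.sum_add_distrib, ← Finset.mul_sum, ← Finset.mul_sum,
          Finset.sum_range_reflect (fun j => q ^ j)]
        ring
    _ ≤ 2 * q * (1 - q)⁻¹ + 1 := by gcongr
    _ = (1 + q) / (1 - q) := by field_simp; ring

lemma sum_erase_zero_prod_pow_cycleNorm_le {q : ℝ} (hq0 : 0 ≤ q) (hq1 : q < 1) (d n : ℕ)
    [NeZero n] :
    ∑ v ∈ Finset.univ.erase (0 : Fin d → Fin n), ∏ j, q ^ cycleNorm n (v j) ≤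
      ((1 + q) / (1 - q)) ^ d - 1 := by
  have hsum : ∑ v : Fin d → Fin n, ∏ j, q ^ cycleNorm n (v j) =
      (∑ w : Fin n, q ^ cycleNorm n w) ^ d := by
    rw [← Fintype.prod_sum (fun (_ : Fin d) (w : Fin n) => q ^ cycleNorm n w),
      Finset.prod_const, Finset.card_univ, Fintype.card_fin]
  rw [Finset.sum_erase_eq_sub (Finset.mem_univ _), hsum]
  simp only [Pi.zero_apply, Fin.val_zero, cycleNorm, Nat.zero_min, pow_zero, Finset.prod_const_one]
  gcongr
  exact sum_fin_pow_cycleNorm_le hq0 hq1 n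

lemma sum_abs_cycleGreen_half_div_sq_le {n : ℕ} [NeZero n] (hn : 6 ≤ n) :
    ∑ v ∈ Finset.univ.erase (0 : Fin 2 → Fin n),
        |cycleGreen n (eta 2 n v) (n / 2 : ℕ)| / (n : ℝ) ^ 2 ≤
      8 / 45 * (24 / 25 + (n : ℝ) ^ 2 * (6 / 7) ^ n) := by
  have hcard : ((Finset.univ.erase (0 : Fin 2 → Fin n)).card : ℝ) ≤ (n : ℝ) ^ 2 := by
    exact_mod_cast (Finset.card_erase_le).trans_eq (by simp)
  have hgeom := sum_erase_zero_prod_pow_cycleNorm_le (q := 1 / 6) (by norm_num) (by norm_num) 2 n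
  calc ∑ v ∈ Finset.univ.erase (0 : Fin 2 → Fin n),
          |cycleGreen n (eta 2 n v) (n / 2 : ℕ)| / (n : ℝ) ^ 2
      ≤ ∑ v ∈ Finset.univ.erase (0 : Fin 2 → Fin n),
          8 / 45 * (∏ j, (1 / 6 : ℝ) ^ cycleNorm n (v j) + (6 / 7) ^ n) :=
        Finset.sum_le_sum fun v hv =>
          (abs_cycleGreen_eta_half_div_sq_le hn (Finset.ne_of_mem_erase hv)).trans
            (by gcongr; exact exp_neg_mul_decayRate_le v)
    _ = 8 / 45 * (∑ v ∈ Finset.univ.erase (0 : Fin 2 → Fin n),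
            ∏ j, (1 / 6 : ℝ) ^ cycleNorm n (v j) +
          (Finset.univ.erase (0 : Fin 2 → Fin n)).card * (6 / 7) ^ n) := by
        rw [← Finset.mul_sum, Finset.sum_add_distrib, Finset.sum_const, nsmul_eq_mul]
    _ ≤ 8 / 45 * (24 / 25 + (n : ℝ) ^ 2 * (6 / 7) ^ n) := by
        gcongr
        exact hgeom.trans_eq (by norm_num)

lemma sq_mul_six_sevenths_pow_le {n : ℕ} (hn : 80 ≤ n) :
    (n : ℝ) ^ 2 * (6 / 7) ^ n ≤ 1 / 20 := by
  induction n, hn using Nat.le_induction with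
  | base => norm_num
  | succ n hn ih =>
    have hn80 : (80 : ℝ) ≤ n := by exact_mod_cast hn
    calc ((n + 1 : ℕ) : ℝ) ^ 2 * (6 / 7) ^ (n + 1)
        = ((n : ℝ) + 1) ^ 2 * (6 / 7) * (6 / 7) ^ n := by push_cast; ring
      _ ≤ (n : ℝ) ^ 2 * (6 / 7) ^ n := by gcongr; nlinarith
      _ ≤ 1 / 20 := ih

lemma lt_three_rpow_div_two_mul_four_pi_rpow :
    (0.18 : ℝ) < 3 ^ ((2 : ℝ) / 3) / (2 * (4 * π) ^ ((2 : ℝ) / 3)) := by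
  have hbase : (0.6 : ℝ) ^ (3 : ℝ) < 3 / (4 * π) := by
    rw [lt_div_iff₀ (by positivity)]
    norm_num
    linarith [pi_lt_d2]
  calc (0.18 : ℝ) = ((0.6 : ℝ) ^ (3 : ℝ)) ^ ((2 : ℝ) / 3) / 2 := by
        rw [← rpow_mul (by norm_num)]
        norm_num
    _ < (3 / (4 * π)) ^ ((2 : ℝ) / 3) / 2 := by gcongr
    _ = 3 ^ ((2 : ℝ) / 3) / (2 * (4 * π) ^ ((2 : ℝ) / 3)) := by
        rw [div_rpow (by norm_num) (by positivity), div_div, mul_comm 2]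

end

theorem zero_average_green_boundary_bound_3d_general {n : ℕ} (hn : 80 ≤ n)
    {x y : Fin 3 → ZMod n} {i : Fin 3}
    (h : x i - y i = (n / 2 : ℕ) ∨ x i - y i = -(n / 2 : ℕ)) :
    (n : ℝ) * torusGreen0 3 n x y ≤ 0.18 := by
  have : NeZero n := ⟨by lia⟩
  have hn0 : (n : ℝ) ≠ 0 := NeZero.ne _
  calc (n : ℝ) * torusGreen0 3 n x y
      ≤ n * (1 / (n : ℝ) ^ 3 * ∑ v ∈ Finset.univ.erase (0 : Fin 2 → Fin n),
          |cycleGreen n (eta 2 n v) (n / 2 : ℕ)|) := by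
        gcongr
        exact torusGreen0_le_sum_abs_cycleGreen h
    _ = ∑ v ∈ Finset.univ.erase (0 : Fin 2 → Fin n),
          |cycleGreen n (eta 2 n v) (n / 2 : ℕ)| / (n : ℝ) ^ 2 := by
        rw [← Finset.sum_div]
        field_simp
    _ ≤ 8 / 45 * (24 / 25 + (n : ℝ) ^ 2 * (6 / 7) ^ n) :=
        sum_abs_cycleGreen_half_div_sq_le (by lia)
    _ ≤ 0.18 := by linarith [sq_mul_six_sevenths_pow_le hn]

/-- Boundary estimate for the zero-average Green's function in dimension
`3`: there is a constant `c_* < 3^{2/3}/(2 (4π)^{2/3})` such that for all large `n` and every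
`y ∈ ℤ³` on the boundary of the cube `[−⌊n/2⌋, ⌊n/2⌋]³`, one has `n · G_n^0(0, ȳ) ≤ c_*`. -/
theorem zero_average_green_boundary_bound_3d :
    ∃ cstar : ℝ,
      cstar < 3 ^ ((2 : ℝ) / 3) / (2 * (4 * Real.pi) ^ ((2 : ℝ) / 3)) ∧
      ∃ n0 : ℕ, ∀ n : ℕ, n0 ≤ n →
        ∀ y : Fin 3 → ℤ,
          (∀ i, (y i).natAbs ≤ n / 2) → (∃ i, (y i).natAbs = n / 2) →
          (n : ℝ) * torusGreen0 3 n (fun _ => 0) (fun i => (y i : ZMod n)) ≤ cstar := by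
  refine ⟨0.18, lt_three_rpow_div_two_mul_four_pi_rpow, 80, fun n hn y _ ⟨i, hi⟩ => ?_⟩
  refine zero_average_green_boundary_bound_3d_general hn (i := i) ?_
  rcases Int.natAbs_eq (y i) with h | h <;> rw [hi] at h
  · right
    rw [h, Int.cast_natCast, zero_sub]
  · left
    rw [h, Int.cast_neg, Int.cast_natCast, zero_sub, neg_neg]

end
end

section
/- Let d ≥ 1. There exist constants 0 < c ≤ C, depending only on d, such that for every n ≥ 3 and every 2 ≤ k ≤ n^d, the k-th smallest element (counted with multiplicity) of the multiset {η_w : w ∈ {0,…,n−1}^d} lies in the interval [c·k^{2/d}/n², C·k^{2/d}/n²]. -/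
/-!
Up to factors depending only on `d`, the eigenvalue `η_w` is `(‖w‖ / n) ^ 2`, where `‖w‖` is the
sup-norm distance from `w` to `0` on the torus: this is the pair of bounds
`2 x ^ 2 / π ^ 2 ≤ 1 - cos x ≤ x ^ 2 / 2` on `[-π, π]`. The ball of radius `m` has
`min n (2 * m + 1) ^ d` points, so if `(2 * m + 1) ^ d < k ≤ (2 * m + 3) ^ d`, then the `k`-th
eigenvalue is comparable to `((m + 1) / n) ^ 2`, while `m + 1` is comparable to `k ^ (1 / d)`.
-/

open Filter Topology
open scoped Classical

noncomputable section

section SortedEnumeration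

open Finset

variable {ι κ α : Type*} [Fintype ι] [Fintype κ] {f : ι → α}

lemma card_filter_eq_of_map_eq {g : κ → α} (h : univ.val.map f = univ.val.map g) (p : α → Prop)
    [DecidablePred p] : #{i | p (f i)} = #{j | p (g j)} := by
  simpa only [Multiset.countP_map, card_def, filter_val] using congrArg (Multiset.countP p) h

lemma lt_card_filter_le_iff_of_map_eq [Preorder α] [DecidableLE α] {m : ℕ} {g : Fin m → α}
    (hg : Monotone g) (h : univ.val.map f = univ.val.map g) (j : Fin m) (x : α) :
    (j : ℕ) < #{i | f i ≤ x} ↔ g j ≤ x := by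
  rw [card_filter_eq_of_map_eq h (· ≤ x)]
  exact Tuple.lt_card_le_iff_apply_le_of_monotone hg

end SortedEnumeration

section CyclicNorm

open Finset

variable {n : ℕ}

/-- The distance from `a` to `0` in the cycle `ℤ/nℤ`, whose residues are encoded as `Fin n`. -/
def cyclicNorm (a : Fin n) : ℕ :=
  min a (n - a)

lemma two_mul_cyclicNorm_le (a : Fin n) : 2 * cyclicNorm a ≤ n := by
  unfold cyclicNorm
  omega

lemma cos_two_pi_mul_cyclicNorm_div (a : Fin n) :
    Real.cos (2 * Real.pi * (cyclicNorm a / n)) = Real.cos (2 * Real.pi * a / n) := by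
  have hn : (n : ℝ) ≠ 0 := Nat.cast_ne_zero.2 a.pos.ne'
  rcases min_choice (a : ℕ) (n - a) with h | h <;> rw [cyclicNorm, h]
  · rw [mul_div_assoc]
  · rw [Nat.cast_sub a.is_lt.le, sub_div, div_self hn, mul_sub, mul_one, Real.cos_two_pi_sub,
      mul_div_assoc]

lemma card_cyclicNorm_le (n m : ℕ) : #{a : Fin n | cyclicNorm a ≤ m} = min n (2 * m + 1) := by
  have far : #{a : Fin n | ¬ cyclicNorm a ≤ m} = n - m - (m + 1) := by
    rw [← Nat.card_Ico, ← card_map Fin.valEmbedding]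
    congr 1
    ext b
    simp only [Finset.mem_map, mem_filter, mem_univ, true_and, Fin.valEmbedding_apply, mem_Ico]
    unfold cyclicNorm
    constructor
    · rintro ⟨a, ha, rfl⟩
      omega
    · exact fun hb => ⟨⟨b, by omega⟩, by grind, rfl⟩
  have total := card_filter_add_card_filter_not (s := univ) fun a : Fin n => cyclicNorm a ≤ m
  rw [card_univ, Fintype.card_fin] at total
  omega

lemma card_forall_cyclicNorm_le (d n m : ℕ) :
    #{w : Fin d → Fin n | ∀ i, cyclicNorm (w i) ≤ m} = min n (2 * m + 1) ^ d := by
  rw [← card_cyclicNorm_le, ← Fintype.card_piFinset_const]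
  congr 1
  ext w
  simp only [mem_filter, mem_univ, true_and, Fintype.mem_piFinset]

end CyclicNorm

section EigenvalueBounds

open Finset

variable {d n m : ℕ}

lemma eight_mul_sq_le_one_sub_cos {s : ℝ} (hs : |s| ≤ 1 / 2) :
    8 * s ^ 2 ≤ 1 - Real.cos (2 * Real.pi * s) := by
  have hπ := Real.pi_pos
  have hx : |2 * Real.pi * s| ≤ Real.pi := by
    rw [abs_mul, abs_of_pos (by positivity)]
    nlinarith
  have hcos := Real.cos_le_one_sub_mul_cos_sq hx
  have hsq : 2 / Real.pi ^ 2 * (2 * Real.pi * s) ^ 2 = 8 * s ^ 2 := by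
    field_simp
    ring
  linarith

lemma one_sub_cos_le_two_mul_pi_sq_mul_sq (s : ℝ) :
    1 - Real.cos (2 * Real.pi * s) ≤ 2 * Real.pi ^ 2 * s ^ 2 := by
  linarith [Real.one_sub_sq_div_two_le_cos (x := 2 * Real.pi * s)]

lemma eta_eq_sum_cyclicNorm (w : Fin d → Fin n) :
    eta d n w = 2 * ∑ i, (1 - Real.cos (2 * Real.pi * (cyclicNorm (w i) / n))) := by
  simp only [eta, cos_two_pi_mul_cyclicNorm_div]

lemma sixteen_mul_sq_cyclicNorm_div_le_eta (w : Fin d → Fin n) (i : Fin d) :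
    16 * ((cyclicNorm (w i) : ℝ) / n) ^ 2 ≤ eta d n w := by
  have hn : (0 : ℝ) < n := Nat.cast_pos.2 (w i).pos
  have hhalf : |(cyclicNorm (w i) : ℝ) / n| ≤ 1 / 2 := by
    rw [abs_of_nonneg (by positivity), div_le_div_iff₀ hn two_pos]
    exact_mod_cast (by linarith [two_mul_cyclicNorm_le (w i)])
  have hterm := single_le_sum
    (f := fun j => 1 - Real.cos (2 * Real.pi * (cyclicNorm (w j) / n)))
    (fun j _ => sub_nonneg.2 (Real.cos_le_one _)) (mem_univ i)
  rw [eta_eq_sum_cyclicNorm]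
  linarith [eight_mul_sq_le_one_sub_cos hhalf]

lemma eta_le_of_forall_cyclicNorm_le {w : Fin d → Fin n} (hw : ∀ i, cyclicNorm (w i) ≤ m) :
    eta d n w ≤ 4 * Real.pi ^ 2 * d * (m / n) ^ 2 := by
  calc eta d n w
      = 2 * ∑ i, (1 - Real.cos (2 * Real.pi * (cyclicNorm (w i) / n))) := eta_eq_sum_cyclicNorm w
    _ ≤ 2 * ∑ _i : Fin d, 2 * Real.pi ^ 2 * ((m : ℝ) / n) ^ 2 := by
        gcongr with i
        refine (one_sub_cos_le_two_mul_pi_sq_mul_sq _).trans ?_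
        gcongr
        exact hw i
    _ = 4 * Real.pi ^ 2 * d * (m / n) ^ 2 := by
        rw [sum_const, card_univ, Fintype.card_fin, nsmul_eq_mul]
        ring

lemma card_eta_le_le {x : ℝ} (hx : x < 16 * ((m + 1 : ℝ) / n) ^ 2) :
    #{w | eta d n w ≤ x} ≤ (2 * m + 1) ^ d := by
  calc #{w | eta d n w ≤ x}
      ≤ #{w : Fin d → Fin n | ∀ i, cyclicNorm (w i) ≤ m} := by
        refine card_le_card (monotone_filter_right _ fun w _ hw i => ?_)
        by_contra! hfar
        have : 16 * ((m + 1 : ℝ) / n) ^ 2 ≤ 16 * ((cyclicNorm (w i) : ℝ) / n) ^ 2 := by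
          gcongr
          exact_mod_cast hfar
        linarith [sixteen_mul_sq_cyclicNorm_div_le_eta w i]
    _ = min n (2 * m + 1) ^ d := card_forall_cyclicNorm_le d n m
    _ ≤ (2 * m + 1) ^ d := Nat.pow_le_pow_left (min_le_right _ _) d

lemma min_pow_le_card_eta_le (d n m : ℕ) :
    min n (2 * m + 1) ^ d ≤ #{w | eta d n w ≤ 4 * Real.pi ^ 2 * d * (m / n) ^ 2} := by
  rw [← card_forall_cyclicNorm_le]
  exact card_le_card (monotone_filter_right _ fun w _ => eta_le_of_forall_cyclicNorm_le)

end EigenvalueBounds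

section SortedEigenvalues

variable {d n m : ℕ} {g : Fin (n ^ d) → ℝ}

lemma sixteen_mul_sq_le_sorted_eta (hg : Monotone g)
    (h : Finset.univ.val.map (eta d n) = Finset.univ.val.map g) {j : Fin (n ^ d)}
    (hj : (2 * m + 1) ^ d ≤ j) : 16 * ((m + 1 : ℝ) / n) ^ 2 ≤ g j := by
  by_contra! hlt
  have hcount := (lt_card_filter_le_iff_of_map_eq hg h j (g j)).2 le_rfl
  exact (hcount.trans_le (card_eta_le_le hlt)).not_ge hj

lemma sorted_eta_le (hg : Monotone g)
    (h : Finset.univ.val.map (eta d n) = Finset.univ.val.map g) {j : Fin (n ^ d)}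
    (hj : j < (2 * m + 1) ^ d) : g j ≤ 4 * Real.pi ^ 2 * d * (m / n) ^ 2 := by
  refine (lt_card_filter_le_iff_of_map_eq hg h j _).1
    (lt_of_lt_of_le ?_ (min_pow_le_card_eta_le d n m))
  rw [(pow_left_mono d).map_min]
  exact lt_min j.is_lt hj

end SortedEigenvalues

section Shells

variable {d k m : ℕ}

lemma exists_odd_pow_lt_le (hd : d ≠ 0) (hk : 1 < k) :
    ∃ m : ℕ, (2 * m + 1) ^ d < k ∧ k ≤ (2 * (m + 1) + 1) ^ d := by
  have hex : ∃ r : ℕ, k ≤ (2 * r + 1) ^ d :=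
    ⟨k, (by omega : k ≤ 2 * k + 1).trans (Nat.le_self_pow hd _)⟩
  obtain ⟨m, hm⟩ : ∃ m, Nat.find hex = m + 1 :=
    Nat.exists_eq_succ_of_ne_zero fun h0 => by
      have := Nat.find_spec hex
      rw [h0, mul_zero, zero_add, one_pow] at this
      omega
  exact ⟨m, not_le.1 (Nat.find_min hex (by omega)), hm ▸ Nat.find_spec hex⟩

lemma pow_rpow_div_natCast {b : ℝ} (hb : 0 ≤ b) (hd : d ≠ 0) (p : ℝ) :
    (b ^ d) ^ (p / d) = b ^ p := by
  rw [div_eq_inv_mul, Real.rpow_mul (by positivity), Real.pow_rpow_inv_natCast hb hd]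

lemma rpow_le_rpow_div_natCast {b p x : ℝ} (hb : 0 ≤ b) (hp : 0 ≤ p) (hd : d ≠ 0)
    (h : b ^ d ≤ x) : b ^ p ≤ x ^ (p / d) := by
  rw [← pow_rpow_div_natCast hb hd]
  exact Real.rpow_le_rpow (by positivity) h (by positivity)

lemma rpow_div_natCast_le_rpow {b p x : ℝ} (hb : 0 ≤ b) (hp : 0 ≤ p) (hd : d ≠ 0) (hx : 0 ≤ x)
    (h : x ≤ b ^ d) : x ^ (p / d) ≤ b ^ p := by
  rw [← pow_rpow_div_natCast hb hd]
  exact Real.rpow_le_rpow hx h (by positivity)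

lemma succ_sq_le_rpow_two_div (hd : d ≠ 0) (h : (2 * m + 1) ^ d ≤ k) :
    (m + 1 : ℝ) ^ 2 ≤ (k : ℝ) ^ ((2 : ℝ) / d) := by
  calc (m + 1 : ℝ) ^ 2 ≤ (2 * m + 1) ^ 2 := by
        gcongr
        linarith [m.cast_nonneg (α := ℝ)]
    _ = (2 * m + 1 : ℝ) ^ (2 : ℝ) := (Real.rpow_two _).symm
    _ ≤ (k : ℝ) ^ ((2 : ℝ) / d) :=
        rpow_le_rpow_div_natCast (by positivity) two_pos.le hd (by exact_mod_cast h)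

lemma rpow_two_div_le_sixteen_mul_succ_sq (hd : d ≠ 0) (h : k ≤ (2 * (m + 1) + 1) ^ d) :
    (k : ℝ) ^ ((2 : ℝ) / d) ≤ 16 * (m + 1 : ℝ) ^ 2 := by
  calc (k : ℝ) ^ ((2 : ℝ) / d) ≤ (2 * (m + 1) + 1 : ℝ) ^ (2 : ℝ) :=
        rpow_div_natCast_le_rpow (by positivity) two_pos.le hd k.cast_nonneg (by exact_mod_cast h)
    _ = (2 * (m + 1) + 1) ^ 2 := Real.rpow_two _
    _ ≤ (4 * (m + 1)) ^ 2 := by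
        gcongr
        linarith [m.cast_nonneg (α := ℝ)]
    _ = 16 * (m + 1) ^ 2 := by ring

end Shells

/-- Two-sided bound `η_(k) = Θ(k^{2/d}/n²)`: there exist constants
`0 < c ≤ C` depending only on `d` such that for all `n ≥ 3` and `2 ≤ k ≤ n^d`, the `k`-th
smallest element (with multiplicity) of the multiset `{η_w}` lies in
`[c k^{2/d}/n², C k^{2/d}/n²]`. Here the sorted enumeration is encoded by a monotone
function `ηs` whose values (as a multiset) coincide with `{η_w : w}`. -/
theorem torus_laplacian_eigenvalue_asymptotics (d : ℕ) (hd : 1 ≤ d) :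
    ∃ c C : ℝ, 0 < c ∧ c ≤ C ∧
      ∀ n : ℕ, 3 ≤ n → ∀ ηs : ℕ → ℝ,
        (∀ j k : ℕ, j ≤ k → k < n ^ d → ηs j ≤ ηs k) →
        (Multiset.map (eta d n) (Finset.univ : Finset (Fin d → Fin n)).val
          = ↑(List.ofFn fun j : Fin (n ^ d) => ηs (j : ℕ))) →
        ∀ k : ℕ, 2 ≤ k → k ≤ n ^ d →
          c * (k : ℝ) ^ ((2 : ℝ) / d) / (n : ℝ) ^ 2 ≤ ηs (k - 1) ∧
          ηs (k - 1) ≤ C * (k : ℝ) ^ ((2 : ℝ) / d) / (n : ℝ) ^ 2 := by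
  have hd0 : d ≠ 0 := by omega
  have hd1 : (1 : ℝ) ≤ d := by exact_mod_cast hd
  refine ⟨1, 4 * Real.pi ^ 2 * d, one_pos, by nlinarith [Real.pi_gt_three], ?_⟩
  intro n _ ηs hmono hms k hk hkn
  have hsorted : Monotone fun j : Fin (n ^ d) => ηs j := fun i j hij => hmono i j hij j.is_lt
  rw [← Fin.univ_val_map] at hms
  obtain ⟨m, hlt, hle⟩ := exists_odd_pow_lt_le hd0 hk
  have hlower := sixteen_mul_sq_le_sorted_eta hsorted hms (j := ⟨k - 1, by omega⟩)
    (Nat.le_sub_one_of_lt hlt)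
  have hupper := sorted_eta_le hsorted hms (j := ⟨k - 1, by omega⟩)
    (Nat.sub_one_lt_of_le (by omega) hle)
  rw [div_pow] at hlower hupper
  constructor
  · refine le_trans ?_ hlower
    rw [one_mul, mul_div_assoc']
    gcongr
    exact rpow_two_div_le_sixteen_mul_succ_sq hd0 hle
  · refine hupper.trans ?_
    rw [mul_div_assoc]
    gcongr
    exact_mod_cast succ_sq_le_rpow_two_div hd0 hlt.le

end
end
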